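/- arXiv:1201.3294 — 2 statements merged into one kernel-verified Lean document; each statement's English description precedes it below -/
import Mathlib

section
/- Let q be even. There is no codeword of the dual binary code of points and lines of Q(4,q) whose weight lies strictly between q^3 + (5q-4)/6 and q^3 + q. Equivalently, there is no set of points of Q(4,q) meeting every line in an even number of points whose size lies in the open interval (q^3 + (5q-4)/6, q^3 + q). -/
/-!
In characteristic two, projection from the nucleus `(0,0,0,0,1)` identifies the points and lines of
`Q(4,q)` with the points and the totally isotropic lines of the symplectic space `W(3,q)`
(`numPts_ptCone`, `lineCount_ptCone`). Let `S` meet every line evenly. As `q + 1` is odd, the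
complement `B` of `S` meets every totally isotropic line oddly, and `S` has its size in the
forbidden interval exactly when `B` has `q² + 1 + r` points with `0 < r` and `6 r < q + 4`. So it is
enough to prove `symplectic_gap`.

A parity count shows that `r` is even, and since `4 ∣ q` this gives `6 r ≤ q`. Choose a minimal
blocking set `O ⊆ B`. If `O` has no two collinear points, it is an ovoid, with `q² + 1` points and
exactly one on each line (`IsMinBlocking.ovoid`). Then `B \ O` has `r > 0` points and meets every
line evenly; as each of the `q + 1` lines through one of its points contains another one, it has more
than `q` points (`card_lt_numPts_of_even`), a contradiction.

That `O` has no two collinear points (`IsMinBlocking.eq_smul`) is the heart of the proof.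
* Every point `Q` of `O` lies on a tangent line. Counting along the lines that meet a tangent line
  shows that the plane `Q^⊥` contains at most `r` points of `O` off that line, and that all but at
  most `r` of the `q` other points `X` on the tangent line are *good*: each totally isotropic line
  through `X` contains exactly one point of `O` (`tangent_bound`).
* For a good point `X`, the points of `O` in the plane `X^⊥` form a set of `q + 1` points, one on
  each line through `X`. Counting on dual grids bounds `O` from below in terms of hyperbolic lines
  meeting `O` in few points (`grid_bound`), and this forces more than half of the `q + 1` points to
  be internal nuclei, that is, points that lie on no line with three points of the set.
* As in the theorem of Bichara and Korchmáros on internal nuclei, such a set has no tangent line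
  off `X` (`exists_zero_of_nuclei`). The reason is algebraic: the sum of the slopes of the lines
  through a point of the set is a polynomial of low degree that vanishes at the nuclei; hence it is
  zero, and a line missing the affine part of the set would then contradict the nonsingularity of
  a Cauchy matrix.
* If `P`, `Q` in `O` were collinear, each of the at least `q - r` good points on a tangent line at
  `Q` would thus give another point of `O` in `P^⊥`, whereas `P^⊥` contains at most `r` of them.
-/

open scoped Classical

noncomputable section

variable (F : Type*) [Field F] [Fintype F]

/-- The standard non-singular parabolic quadratic form on `F^5` defining `Q(4,q)`. -/
def Q4Form : (Fin 5 → F) → F := fun v => v 0 * v 1 + v 2 * v 3 + v 4 ^ 2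

/-- Points of the parabolic quadric `Q(4,q)`: singular projective points, i.e.
one-dimensional subspaces on which the form vanishes. -/
def Q4Point := {W : Submodule F (Fin 5 → F) //
  Module.finrank F W = 1 ∧ ∀ v ∈ W, Q4Form F v = 0}

/-- Lines of the parabolic quadric `Q(4,q)`: totally singular two-dimensional subspaces. -/
def Q4Line := {W : Submodule F (Fin 5 → F) //
  Module.finrank F W = 2 ∧ ∀ v ∈ W, Q4Form F v = 0}

/-! ### Internal nuclei in the affine plane -/

section Planar
variable {K : Type*} [Field K]

/-- The slope of the line joining `(u, f u)` and `(x, f x)`; it is `0` for `x = u`. -/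
def slopeAt (f : K → K) (u x : K) : K := (f x - f u) * (x - u)⁻¹

/-- Projective change of coordinates moving `(u, f u)` to infinity: the slopes seen from
`(v, f v)` after the change are, up to inversion and an affine map, the slopes before it, with `u`
and `v` interchanged. -/
theorem slope_swap (f : K → K) {u v : K} (huv : v ≠ u)
    (hv : ∀ x, x ≠ v → f x ≠ f v) (x : K) :
    ((x - u)⁻¹ - (v - u)⁻¹) * (slopeAt f u x - slopeAt f u v)⁻¹ =
      ((f v - f u) - (v - u) * slopeAt f v (Equiv.swap u v x))⁻¹ := by
  have h1 : v - u ≠ 0 := sub_ne_zero.2 huv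
  have h2 : f v - f u ≠ 0 := fun h => hv u huv.symm (sub_eq_zero.1 h).symm
  have h1' : u - v ≠ 0 := sub_ne_zero.2 huv.symm
  by_cases hxu : x = u
  · subst hxu
    simp only [Equiv.swap_apply_left, slopeAt, sub_self, inv_zero, mul_zero, zero_sub, sub_zero]
    field_simp
  by_cases hxv : x = v
  · subst hxv
    simp only [Equiv.swap_apply_right, slopeAt, sub_self, inv_zero, mul_zero]
    have : f x - f u - (x - u) * ((f u - f x) * (u - x)⁻¹) = 0 := by
      field_simp; ring
    rw [this, inv_zero]
  rw [Equiv.swap_apply_of_ne_of_ne hxu hxv]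
  have h3 : x - u ≠ 0 := sub_ne_zero.2 hxu
  have h4 : x - v ≠ 0 := sub_ne_zero.2 hxv
  have e1 : (x - u)⁻¹ - (v - u)⁻¹ = (v - x) / ((x - u) * (v - u)) := by field_simp; ring
  have e2 : slopeAt f u x - slopeAt f u v =
      ((f v - f u) - (v - u) * slopeAt f v x) * ((v - x) / ((x - u) * (v - u))) := by
    unfold slopeAt; field_simp; ring
  have h5 : (v - x) / ((x - u) * (v - u)) ≠ 0 :=
    div_ne_zero (sub_ne_zero.2 (Ne.symm hxv)) (mul_ne_zero h3 h1)
  rw [e1, e2, mul_inv, mul_comm, mul_assoc, inv_mul_cancel₀ h5, mul_one]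

/-- The columns of a Cauchy matrix with at least as many rows as columns are independent. -/
theorem eq_zero_of_cauchy_sum {D J : Finset K} (hDJ : Disjoint D J) (hc : D.card ≤ J.card) (d : K → K)
    (h : ∀ a ∈ J, ∑ b ∈ D, d b * (b - a)⁻¹ = 0) : ∀ b ∈ D, d b = 0 := by
  intro b hb
  let H : Polynomial K := ∑ b ∈ D, Polynomial.C (d b) *
    ∏ c ∈ D.erase b, (Polynomial.C c - Polynomial.X)
  have hH0 : H = 0 := by
    refine Polynomial.eq_zero_of_natDegree_lt_card_of_eval_eq_zero' H J ?_ ?_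
    · intro a ha
      have : H.eval a = (∏ c ∈ D, (c - a)) * ∑ b ∈ D, d b * (b - a)⁻¹ := by
        simp only [H, Polynomial.eval_finsetSum, Polynomial.eval_mul, Polynomial.eval_C,
          Polynomial.eval_prod, Polynomial.eval_sub, Polynomial.eval_X, Finset.mul_sum]
        refine Finset.sum_congr rfl fun b hb => ?_
        rw [← Finset.mul_prod_erase D _ hb]
        have : b - a ≠ 0 := sub_ne_zero.2 fun e => Finset.disjoint_left.1 hDJ hb (e ▸ ha)
        field_simp
      rw [this, h a ha, mul_zero]
    · refine lt_of_lt_of_le ?_ hc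
      have hpos : 0 < D.card := Finset.card_pos.2 ⟨b, hb⟩
      have : H.natDegree ≤ D.card - 1 := by
        refine Polynomial.natDegree_sum_le_of_forall_le _ _ fun c hcD => ?_
        refine (Polynomial.natDegree_C_mul_le _ _).trans ?_
        refine (Polynomial.natDegree_prod_le _ _).trans ?_
        rw [← Finset.card_erase_of_mem hcD, Finset.card_eq_sum_ones]
        refine Finset.sum_le_sum fun x _ => ?_
        exact (Polynomial.natDegree_sub_le _ _).trans (by simp)
      omega
  have := congrArg (Polynomial.eval b) hH0
  simp only [H, Polynomial.eval_finsetSum, Polynomial.eval_mul, Polynomial.eval_C,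
    Polynomial.eval_prod, Polynomial.eval_sub, Polynomial.eval_X, Polynomial.eval_zero] at this
  rw [Finset.sum_eq_single_of_mem b hb] at this
  · rcases mul_eq_zero.1 this with h0 | h0
    · exact h0
    · obtain ⟨c, hc, hc0⟩ := Finset.prod_eq_zero_iff.1 h0
      exact absurd (sub_eq_zero.1 hc0) (Finset.ne_of_mem_erase hc)
  · intro c _ hcb
    rw [Finset.prod_eq_zero (f := fun x => x - b) (Finset.mem_erase.2 ⟨hcb.symm, hb⟩)
      (sub_self b), mul_zero]

variable [Fintype K]

theorem sum_all_eq_zero (hq : 2 < Fintype.card K) : ∑ x : K, x = 0 := by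
  have := FiniteField.sum_pow_lt_card_sub_one K 1 (by omega)
  simpa using this

theorem sum_inv_sub (hq : 2 < Fintype.card K) (u : K) : ∑ x : K, (x - u)⁻¹ = 0 := by
  have hb : Function.Bijective fun x : K => (x - u)⁻¹ :=
    Finite.injective_iff_bijective.1 (inv_injective.comp sub_left_injective)
  rw [Function.Bijective.sum_comp hb (fun x => x), sum_all_eq_zero hq]

theorem sum_slopeAt (hq : 2 < Fintype.card K) (f : K → K) (u : K) :
    ∑ x, slopeAt f u x = ∑ x, f x * (x - u)⁻¹ := by
  simp only [slopeAt, sub_mul, Finset.sum_sub_distrib, ← Finset.mul_sum, sum_inv_sub hq, mul_zero,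
    sub_zero]

theorem inv_eq_pow_card (hq : 2 < Fintype.card K) (x : K) : x⁻¹ = x ^ (Fintype.card K - 2) := by
  rcases eq_or_ne x 0 with rfl | hx
  · rw [inv_zero, zero_pow (by omega)]
  · have := FiniteField.pow_card_sub_one_eq_one x hx
    refine (eq_inv_of_mul_eq_one_left ?_).symm
    rwa [← pow_succ, show Fintype.card K - 2 + 1 = Fintype.card K - 1 by omega]

/-- In characteristic two, `1 / (x - u) = (x² + u²) ^ ((q - 2) / 2)`, so the sum of the slopes at
`(u, f u)` is a polynomial of degree at most `(q - 2) / 2` in `u²`.  It vanishes at every `u` whose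
slopes are pairwise distinct, so `q / 2` such `u` make it vanish identically. -/
theorem sum_slope_eq_zero [CharP K 2] (hq : 2 < Fintype.card K) (he : Even (Fintype.card K))
    (f : K → K) (J : Finset K) (hJ : Fintype.card K ≤ 2 * J.card)
    (h : ∀ u ∈ J, Function.Injective (slopeAt f u)) (u : K) :
    ∑ x, f x * (x - u)⁻¹ = 0 := by
  obtain ⟨k, hk⟩ := he
  let G : Polynomial K := ∑ x, Polynomial.C (f x) * (Polynomial.X + Polynomial.C (x ^ 2)) ^ (k - 1)
  have hG : ∀ u, G.eval (u ^ 2) = ∑ x, f x * (x - u)⁻¹ := by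
    intro u
    simp only [G, Polynomial.eval_finsetSum, Polynomial.eval_mul, Polynomial.eval_C,
      Polynomial.eval_pow, Polynomial.eval_add, Polynomial.eval_X]
    refine Finset.sum_congr rfl fun x _ => ?_
    rw [inv_eq_pow_card hq, ← CharTwo.add_sq, ← pow_mul, CharTwo.sub_eq_add, add_comm u]
    congr 2; omega
  have hdeg : G.natDegree ≤ k - 1 := by
    refine Polynomial.natDegree_sum_le_of_forall_le _ _ fun x _ => ?_
    refine (Polynomial.natDegree_C_mul_le _ _).trans ?_
    refine Polynomial.natDegree_pow_le.trans ?_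
    rw [Polynomial.natDegree_X_add_C, mul_one]
  have hG0 : G = 0 := by
    refine Polynomial.eq_zero_of_natDegree_lt_card_of_eval_eq_zero' G (J.image (· ^ 2)) ?_ ?_
    · intro y hy
      obtain ⟨u, hu, rfl⟩ := Finset.mem_image.1 hy
      rw [hG, ← sum_slopeAt hq]
      have hb : Function.Bijective (slopeAt f u) := Finite.injective_iff_bijective.1 (h u hu)
      rw [Function.Bijective.sum_comp hb (fun x => x), sum_all_eq_zero hq]
    · rw [Finset.card_image_of_injective _ (CharTwo.sq_injective)]
      omega
  rw [← hG, hG0, Polynomial.eval_zero]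

/-- Moving the point `(u, f u)` to infinity turns `f` into the function `g` with
`g (slopeAt f u x) = (x - u)⁻¹`, and the other points of `I` remain internal nuclei, so
`sum_slope_eq_zero` applies to `g`; the sum for `g` at `0` is the one stated here. -/
theorem sum_inv_image_eq_zero [CharP K 2] (hq : 2 < Fintype.card K) (he : Even (Fintype.card K))
    (f : K → K) (I : Finset K) (hI : Fintype.card K + 2 ≤ 2 * I.card)
    (h : ∀ u ∈ I, Function.Injective (slopeAt f u)) (u : K) (hu : u ∈ I) :
    ∑ x, (f x - f u)⁻¹ = 0 := by
  have hne : ∀ v ∈ I, ∀ x, x ≠ v → f x ≠ f v := by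
    intro v hv x hx hf
    refine hx (h v hv ?_)
    simp [slopeAt, hf]
  let E : K ≃ K := Equiv.ofBijective _ (Finite.injective_iff_bijective.1 (h u hu))
  have hE : ∀ x, E x = slopeAt f u x := fun x => rfl
  let g : K → K := fun y => (E.symm y - u)⁻¹
  have hg : ∀ x, g (E x) = (x - u)⁻¹ := fun x => by simp [g]
  have key := sum_slope_eq_zero hq he g ((I.erase u).image E) (by
    rw [Finset.card_image_of_injective _ E.injective, Finset.card_erase_of_mem hu]; omega) (by
    intro y hy
    obtain ⟨v, hv, rfl⟩ := Finset.mem_image.1 hy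
    obtain ⟨hvu, hvI⟩ := Finset.mem_erase.1 hv
    have hs : ∀ x, slopeAt g (E v) (E x) =
        ((f v - f u) - (v - u) * slopeAt f v (Equiv.swap u v x))⁻¹ := by
      intro x
      rw [← slope_swap f hvu (hne v hvI) x]
      have : slopeAt g (E v) (E x) = (g (E x) - g (E v)) * (E x - E v)⁻¹ := rfl
      rw [this, hg, hg, hE, hE]
    refine (Function.Injective.of_comp_iff' _ E.bijective).1 ?_
    intro x y hxy
    simp only [Function.comp_apply, hs, inv_inj, sub_right_inj] at hxy
    exact (Equiv.swap u v).injective (h v hvI (mul_left_cancel₀ (sub_ne_zero.2 hvu) hxy))) 0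
  rw [← Equiv.sum_comp E] at key
  rw [← key]
  refine Finset.sum_congr rfl fun x _ => ?_
  rw [hg, sub_zero, hE, slopeAt]
  rcases eq_or_ne x u with rfl | hx
  · simp
  · have := sub_ne_zero.2 hx
    rw [mul_inv, inv_inv, mul_comm, mul_assoc, mul_inv_cancel₀ this, mul_one]

/-- The Bichara-Korchmáros theorem on internal nuclei, in affine form. Injectivity of `slopeAt f u`
says that no line through `(u, f u)` contains three points of the set formed by the graph of `f` and
the point at infinity of the horizontal lines. The conclusion is that the horizontal axis is not
tangent to this set at infinity.  If `f` had no zero, then `d b`, the number of preimages of `b`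
minus one, would be nonzero at `b = 0` and zero on the image of the nuclei, while
`sum_inv_image_eq_zero` says that the Cauchy sums of `d` vanish at the image of the nuclei. -/
theorem exists_zero_of_nuclei [CharP K 2] (hq : 2 < Fintype.card K) (he : Even (Fintype.card K))
    (f : K → K) (I : Finset K) (hI : Fintype.card K + 2 ≤ 2 * I.card)
    (h : ∀ u ∈ I, Function.Injective (slopeAt f u)) : ∃ a, f a = 0 := by
  by_contra! hf
  have hne : ∀ v ∈ I, ∀ x, f x = f v → x = v := by
    intro v hv x hf
    refine h v hv ?_
    simp [slopeAt, hf]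
  let d : K → K := fun b => ((Finset.univ.filter fun x => f x = b).card : K) - 1
  have hd0 : d 0 = -1 := by
    simp [d, hf]
  have hdI : ∀ u ∈ I, d (f u) = 0 := by
    intro u hu
    have : (Finset.univ.filter fun x => f x = f u) = {u} := by
      ext x; simp only [Finset.mem_filter, Finset.mem_univ, true_and, Finset.mem_singleton]
      exact ⟨hne u hu x, fun e => e ▸ rfl⟩
    simp [d, this]
  have hcard : (I.image f).card = I.card :=
    Finset.card_image_of_injOn fun x hx y hy hxy => hne y hy x hxy
  have := eq_zero_of_cauchy_sum (D := (I.image f)ᶜ) (J := I.image f) disjoint_compl_left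
    (by rw [Finset.card_compl, hcard]; omega) d (by
      intro a ha
      have hs : ∑ b ∈ (I.image f)ᶜ, d b * (b - a)⁻¹ = ∑ b, d b * (b - a)⁻¹ := by
        refine Finset.sum_subset (Finset.subset_univ _) fun b _ hb => ?_
        simp only [Finset.mem_compl, not_not] at hb
        obtain ⟨u, hu, rfl⟩ := Finset.mem_image.1 hb
        rw [hdI u hu, zero_mul]
      obtain ⟨u, hu, rfl⟩ := Finset.mem_image.1 ha
      rw [hs]
      simp only [d, sub_mul, Finset.sum_sub_distrib, one_mul, sum_inv_sub hq, sub_zero]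
      have hfib := Finset.sum_fiberwise (g := f) Finset.univ (fun x => (f x - f u)⁻¹)
      rw [sum_inv_image_eq_zero hq he f I hI h u hu] at hfib
      rw [← hfib]
      refine Finset.sum_congr rfl fun b _ => ?_
      rw [Finset.sum_congr rfl (g := fun _ => (b - f u)⁻¹), Finset.sum_const, nsmul_eq_mul]
      intro x hx
      rw [(Finset.mem_filter.1 hx).2]) 0 (by
        simp only [Finset.mem_compl, Finset.mem_image, not_exists, not_and]
        exact fun x _ => hf x)
  rw [hd0] at this
  simp at this
end Planar

/-! ### Symplectic space and blocking sets -/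

/-- The indicator function of `B`. -/
def chi {V : Type*} (B : Set V) (v : V) : ℕ := if v ∈ B then 1 else 0

theorem chi_of_mem {V : Type*} {B : Set V} {v : V} (h : v ∈ B) : chi B v = 1 := if_pos h
theorem chi_of_not_mem {V : Type*} {B : Set V} {v : V} (h : v ∉ B) : chi B v = 0 := if_neg h
theorem chi_eq_zero {V : Type*} {B : Set V} {v : V} : chi B v = 0 ↔ v ∉ B := by simp [chi]

section Symplectic
variable {K : Type*} [Field K]

/-- Coordinate vectors `(c, y, z, t)` of the symplectic space underlying `W(3,q)`. -/
abbrev V4 (K : Type*) := K × K × K × K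

/-- The form `t c' + c t' + y z' + z y'`, alternating in characteristic two. -/
def bform (v w : V4 K) : K :=
  v.2.2.2 * w.1 + v.1 * w.2.2.2 + v.2.1 * w.2.2.1 + v.2.2.1 * w.2.1

theorem bform_comm (v w : V4 K) : bform v w = bform w v := by simp only [bform]; ring

theorem bform_add_left (u v w : V4 K) : bform (u + v) w = bform u w + bform v w := by
  simp only [bform, Prod.fst_add, Prod.snd_add]; ring

theorem bform_add_right (u v w : V4 K) : bform u (v + w) = bform u v + bform u w := by
  simp only [bform, Prod.fst_add, Prod.snd_add]; ring

theorem bform_smul_left (a : K) (v w : V4 K) : bform (a • v) w = a * bform v w := by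
  simp only [bform, Prod.smul_fst, Prod.smul_snd, smul_eq_mul]; ring

theorem bform_smul_right (a : K) (v w : V4 K) : bform v (a • w) = a * bform v w := by
  simp only [bform, Prod.smul_fst, Prod.smul_snd, smul_eq_mul]; ring

theorem bform_self [CharP K 2] (v : V4 K) : bform v v = 0 := by
  have : bform v v = (v.2.2.2 * v.1 + v.2.1 * v.2.2.1) + (v.2.2.2 * v.1 + v.2.1 * v.2.2.1) := by
    simp only [bform]; ring
  rw [this, CharTwo.add_self_eq_zero]

theorem bform_zero_right (v : V4 K) : bform v 0 = 0 := by simp [bform]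

theorem exists_bform_eq_one {h : V4 K} (hh : h ≠ 0) : ∃ g, bform g h = 1 := by
  obtain ⟨c, y, z, t⟩ := h
  by_cases h1 : c = 0
  · by_cases h2 : y = 0
    · by_cases h3 : z = 0
      · by_cases h4 : t = 0
        · subst h1 h2 h3 h4; exact absurd rfl hh
        · exact ⟨(t⁻¹, 0, 0, 0), by simp [bform, h4]⟩
      · exact ⟨(0, z⁻¹, 0, 0), by simp [bform, h3]⟩
    · exact ⟨(0, 0, y⁻¹, 0), by simp [bform, h2]⟩
  · exact ⟨(0, 0, 0, c⁻¹), by simp [bform, h1]⟩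

/-- A linear isometry of the symplectic form. -/
def IsIsom (M : V4 K ≃ₗ[K] V4 K) : Prop := ∀ v w, bform (M v) (M w) = bform v w

/-- The linear map sending the coordinate basis to a prescribed quadruple. -/
def frameMap (f g h e : V4 K) : V4 K →ₗ[K] V4 K where
  toFun v := v.1 • f + v.2.1 • g + v.2.2.1 • h + v.2.2.2 • e
  map_add' v w := by simp only [Prod.fst_add, Prod.snd_add, add_smul]; abel
  map_smul' a v := by
    simp only [Prod.smul_fst, Prod.smul_snd, smul_eq_mul, mul_smul, smul_add, RingHom.id_apply]

/-- A symplectic basis is the image of the coordinate basis under an isometry. -/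
theorem exists_isom [CharP K 2] {f g h e : V4 K} (ef : bform e f = 1) (gh : bform g h = 1)
    (eg : bform e g = 0) (eh : bform e h = 0) (fg : bform f g = 0) (fh : bform f h = 0) :
    ∃ M : V4 K ≃ₗ[K] V4 K, IsIsom M ∧
      ∀ c y z t : K, M (c, y, z, t) = c • f + y • g + z • h + t • e := by
  have hM : ∀ v w, bform (frameMap f g h e v) (frameMap f g h e w) = bform v w := by
    intro v w
    change bform (v.1 • f + v.2.1 • g + v.2.2.1 • h + v.2.2.2 • e)
      (w.1 • f + w.2.1 • g + w.2.2.1 • h + w.2.2.2 • e) = _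
    simp only [bform_add_left, bform_add_right, bform_smul_left, bform_smul_right, bform_self, ef,
      gh, eg, eh, fg, fh, bform_comm f e, bform_comm h g, bform_comm g e, bform_comm h e,
      bform_comm g f, bform_comm h f]
    simp only [bform]; ring
  have hinj : Function.Injective (frameMap f g h e) := by
    rw [← LinearMap.ker_eq_bot, LinearMap.ker_eq_bot']
    intro v hv
    by_contra hne
    obtain ⟨w, hw⟩ := exists_bform_eq_one hne
    rw [← hM, hv, bform_zero_right] at hw
    exact zero_ne_one hw
  exact ⟨LinearEquiv.ofInjectiveEndo _ hinj, hM, fun c y z t => rfl⟩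

/-- Extension of a hyperbolic pair `e, p` and a vector `h` orthogonal to it. -/
theorem exists_isom_of_triple [CharP K 2] {e h p : V4 K} (eh : bform e h = 0) (ph : bform p h = 0)
    (ep : bform e p = 1) (hh : h ≠ 0) :
    ∃ M : V4 K ≃ₗ[K] V4 K, IsIsom M ∧
      M (0, 0, 0, 1) = e ∧ M (0, 0, 1, 0) = h ∧ M (1, 0, 0, 0) = p := by
  obtain ⟨g, hg⟩ := exists_bform_eq_one hh
  obtain ⟨M, hM, hv⟩ := exists_isom (f := p) (g := g + (bform g p • e + bform g e • p)) (h := h)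
    (e := e) ep (by
      simp only [bform_add_left, bform_smul_left, hg, eh, ph]; ring) (by
      simp only [bform_add_right, bform_smul_right, bform_self, ep, bform_comm e g]
      rw [mul_zero, zero_add, mul_one, CharTwo.add_self_eq_zero]) eh (by
      simp only [bform_add_right, bform_smul_right, bform_self, bform_comm p e, ep, bform_comm p g]
      rw [mul_zero, add_zero, mul_one, CharTwo.add_self_eq_zero]) ph
  exact ⟨M, hM, by simp [hv], by simp [hv], by simp [hv]⟩

/-- Any two independent orthogonal vectors are part of a symplectic basis. -/
theorem exists_isom_of_pair [CharP K 2] {e h : V4 K} (eh : bform e h = 0) (hh : h ≠ 0)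
    (hi : ∀ a : K, e ≠ a • h) :
    ∃ M : V4 K ≃ₗ[K] V4 K, IsIsom M ∧ M (0, 0, 0, 1) = e ∧ M (0, 0, 1, 0) = h := by
  obtain ⟨p, ep, ph⟩ : ∃ p, bform e p = 1 ∧ bform p h = 0 := by
    obtain ⟨a, ha⟩ := exists_bform_eq_one hh
    have hne : e + bform e a • h ≠ 0 := fun h0 => hi (bform e a) (CharTwo.add_eq_zero.1 h0)
    obtain ⟨b, hb⟩ := exists_bform_eq_one hne
    refine ⟨b + bform b h • a, ?_, ?_⟩
    · rw [bform_add_right, bform_smul_right] at hb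
      rw [bform_add_right, bform_smul_right, bform_comm e b, ← hb]; ring
    · rw [bform_add_left, bform_smul_left, ha, mul_one, CharTwo.add_self_eq_zero]
  obtain ⟨M, h1, h2, h3, -⟩ := exists_isom_of_triple eh ph ep hh
  exact ⟨M, h1, h2, h3⟩

/-- The vectors of `B` are the nonzero multiples of a set of projective points. -/
def IsCone (B : Set (V4 K)) : Prop := 0 ∉ B ∧ ∀ (a : K) (v : V4 K), a ≠ 0 → (a • v ∈ B ↔ v ∈ B)

/-- `B` meets every totally isotropic line `⟨u, w⟩`. -/
def IsBlocking (B : Set (V4 K)) : Prop :=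
  ∀ u w : V4 K, u ≠ 0 → bform u w = 0 → (∀ a : K, w ≠ a • u) → u ∈ B ∨ ∃ t : K, w + t • u ∈ B

theorem chi_smul {B : Set (V4 K)} (hB : IsCone B) {a : K} (ha : a ≠ 0) (v : V4 K) :
    chi B (a • v) = chi B v := by simp only [chi, hB.2 a v ha]

theorem IsCone.preimage {B : Set (V4 K)} (hB : IsCone B) (M : V4 K ≃ₗ[K] V4 K) :
    IsCone (M ⁻¹' B) :=
  ⟨by simpa using hB.1, fun a v ha => by simpa using hB.2 a (M v) ha⟩

theorem IsBlocking.preimage {B : Set (V4 K)} (hB : IsBlocking B) {M : V4 K ≃ₗ[K] V4 K}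
    (hM : IsIsom M) : IsBlocking (M ⁻¹' B) := by
  intro u w hu huw hw
  have := hB (M u) (M w) (by simpa using hu) (by rw [hM, huw])
    (fun a h => hw a (M.injective (by rw [h, map_smul])))
  simpa using this

variable [Fintype K]

/-- The number of projective points of `B`, counted on normalised coordinate vectors. -/
def numPts (B : Set (V4 K)) : ℕ :=
  (∑ y, ∑ z, ∑ t, chi B (1, y, z, t)) + (∑ z, ∑ t, chi B (0, 1, z, t)) +
    (∑ t, chi B (0, 0, 1, t)) + chi B (0, 0, 0, 1)

/-- A function on `K × M` that is invariant under nonzero scalars is determined by its values at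
`(0, m)` and `(1, m)`. -/
theorem sum_normalise {M : Type*} [AddCommGroup M] [Module K M] [Fintype M] (φ : K → M → ℕ)
    (h : ∀ a m, a ≠ 0 → φ a (a • m) = φ 1 m) :
    ∑ c, ∑ m, φ c m = ∑ m, φ 0 m + (Fintype.card K - 1) * ∑ m, φ 1 m := by
  rw [← Finset.add_sum_erase _ _ (Finset.mem_univ (0 : K))]
  congr 1
  rw [Finset.sum_congr rfl (g := fun _ => ∑ m, φ 1 m), Finset.sum_const,
    Finset.card_erase_of_mem (Finset.mem_univ _), Finset.card_univ, smul_eq_mul]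
  intro a ha
  have ha := Finset.ne_of_mem_erase ha
  rw [← Equiv.sum_comp (LinearEquiv.smulOfUnit (Units.mk0 a ha)).toEquiv]
  exact Finset.sum_congr rfl fun m _ => h a m ha

theorem sum_chi {B : Set (V4 K)} (hB : IsCone B) :
    ∑ v, chi B v = (Fintype.card K - 1) * numPts B := by
  have key : ∀ (a : K) (v : V4 K), a ≠ 0 → chi B (a • v) = chi B v := fun a v ha => chi_smul hB ha v
  have h0 : chi B 0 = 0 := chi_of_not_mem hB.1
  have e1 : ∑ v, chi B v = ∑ c, ∑ m : K × K × K, chi B (c, m) := Fintype.sum_prod_type _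
  have e2 : ∑ m : K × K × K, chi B (0, m) = ∑ c, ∑ m : K × K, chi B (0, c, m) :=
    Fintype.sum_prod_type _
  have e3 : ∑ m : K × K, chi B (0, 0, m) = ∑ c, ∑ t : K, chi B (0, 0, c, t) :=
    Fintype.sum_prod_type _
  have e4 : ∑ t : K, chi B (0, 0, 0, t) = (Fintype.card K - 1) * chi B (0, 0, 0, 1) := by
    rw [← Finset.add_sum_erase _ _ (Finset.mem_univ (0 : K))]
    rw [Finset.sum_congr rfl (g := fun _ => chi B (0, 0, 0, 1)), Finset.sum_const,
      Finset.card_erase_of_mem (Finset.mem_univ _), Finset.card_univ, smul_eq_mul]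
    · change chi B 0 + _ = _
      rw [h0, zero_add]
    · intro a ha
      rw [← key a (0, 0, 0, 1) (Finset.ne_of_mem_erase ha)]; simp
  rw [e1, sum_normalise (fun c m => chi B (c, m))
      (fun a m ha => by rw [← key a (1, m) ha]; simp), e2,
    sum_normalise (fun c m => chi B (0, c, m))
      (fun a m ha => by rw [← key a (0, 1, m) ha]; simp), e3,
    sum_normalise (fun c m => chi B (0, 0, c, m))
      (fun a m ha => by rw [← key a (0, 0, 1, m) ha]; simp), e4]
  simp only [numPts, Fintype.sum_prod_type]
  ring

theorem card_pos_sub : 0 < Fintype.card K - 1 := by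
  have := Fintype.one_lt_card (α := K); omega

theorem numPts_preimage {B : Set (V4 K)} (hB : IsCone B) (M : V4 K ≃ₗ[K] V4 K) :
    numPts (M ⁻¹' B) = numPts B := by
  refine Nat.eq_of_mul_eq_mul_left (card_pos_sub (K := K)) ?_
  rw [← sum_chi hB, ← sum_chi (hB.preimage M), ← Equiv.sum_comp M.toEquiv (chi B)]
  rfl

theorem numPts_mono {B C : Set (V4 K)} (h : B ⊆ C) : numPts B ≤ numPts C := by
  have : ∀ v, chi B v ≤ chi C v := fun v => by
    by_cases hv : v ∈ B
    · rw [chi_of_mem hv, chi_of_mem (h hv)]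
    · rw [chi_of_not_mem hv]; exact Nat.zero_le _
  unfold numPts
  gcongr <;> exact this _

theorem numPts_diff {B C : Set (V4 K)} (h : B ⊆ C) :
    numPts (C \ B) + numPts B = numPts C := by
  have : ∀ v, chi C v = chi (C \ B) v + chi B v := fun v => by
    by_cases hv : v ∈ B
    · simp [chi, hv, h hv]
    · simp [chi, hv]
  simp only [numPts, this, Finset.sum_add_distrib]; ring

end Symplectic

/-! ### Counting around tangent lines and on dual grids -/

theorem sum_chi_eq_one_iff {ι V : Type*} [Fintype ι] (B : Set V) (g : ι → V) :
    ∑ l, chi B (g l) = 1 ↔ ∃! l, g l ∈ B := by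
  simp only [chi, Finset.sum_boole, Nat.cast_id, Finset.card_eq_one, Finset.ext_iff,
    Finset.mem_filter, Finset.mem_univ, true_and, Finset.mem_singleton, ExistsUnique]
  exact exists_congr fun a => ⟨fun h => ⟨(h a).2 rfl, fun y hy => (h y).1 hy⟩,
    fun h x => ⟨h.2 x, fun e => e ▸ h.1⟩⟩

theorem one_le_sum_chi {ι V : Type*} [Fintype ι] {B : Set V} {g : ι → V} (h : ∃ l, g l ∈ B) :
    1 ≤ ∑ l, chi B (g l) := by
  obtain ⟨l, hl⟩ := h
  rw [← chi_of_mem hl]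
  exact Finset.single_le_sum (f := fun l => chi B (g l)) (fun _ _ => Nat.zero_le _)
    (Finset.mem_univ l)

section Count
variable {K : Type*} [Field K]

/-- `X` is a point outside `B` such that every totally isotropic line through `X` meets `B` in
exactly one point. -/
def IsGood (B : Set (V4 K)) (X : V4 K) : Prop :=
  X ∉ B ∧ ∀ w, bform w X = 0 → (∀ a : K, w ≠ a • X) → ∃! t : K, w + t • X ∈ B

theorem ne_smul_of_tangent {Q x : V4 K} (hQ : Q ≠ 0) (hx : ∀ a : K, x ≠ a • Q) (a : K) :
    Q ≠ a • x := by
  rintro h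
  rcases eq_or_ne a 0 with rfl | ha
  · exact hQ (by simpa using h)
  · refine hx a⁻¹ ?_
    rw [h, inv_smul_smul₀ ha]

theorem IsGood.of_preimage {B : Set (V4 K)} {M : V4 K ≃ₗ[K] V4 K} (hM : IsIsom M) {X : V4 K}
    (h : IsGood (M ⁻¹' B) X) : IsGood B (M X) := by
  refine ⟨h.1, fun w hw hne => ?_⟩
  have := h.2 (M.symm w) (by rw [← hM, M.apply_symm_apply, hw])
    (fun a ha => hne a (by rw [← map_smul, ← ha, M.apply_symm_apply]))
  simpa using this

theorem IsGood.preimage {B : Set (V4 K)} {M : V4 K ≃ₗ[K] V4 K} (hM : IsIsom M) {X : V4 K}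
    (h : IsGood B (M X)) : IsGood (M ⁻¹' B) X := by
  refine ⟨h.1, fun w hw hne => ?_⟩
  have := h.2 (M w) (by rw [hM, hw]) (fun a ha => hne a (M.injective (by rw [ha, map_smul])))
  simpa using this

variable [Fintype K]

/-- The points of `B` counted along the lines joining `(0,0,1,y)` to `(1,y,0,s)`, after those in the
plane orthogonal to `(0,0,0,1)`. -/
theorem numPts_eq (B : Set (V4 K)) : numPts B =
    chi B (0, 0, 0, 1) + (∑ y, chi B (0, 0, 1, y)) + (∑ z, ∑ t, chi B (0, 1, z, t)) +
      ∑ y, ∑ s, ∑ l, chi B (1, y, l, s + l * y) := by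
  have : ∀ y : K, ∑ s, ∑ l, chi B (1, y, l, s + l * y) = ∑ l, ∑ t, chi B (1, y, l, t) := by
    intro y
    rw [Finset.sum_comm]
    refine Finset.sum_congr rfl fun l _ => ?_
    exact Equiv.sum_comp (Equiv.addRight (l * y)) (fun t => chi B (1, y, l, t))
  simp only [this, numPts]; ring

/-- Coordinates in which `⟨(0,0,0,1), (0,0,1,0)⟩` is a tangent line of `B` at `(0,0,0,1)`: the excess
`r` bounds both the number of further points of `B` in the tangent plane and the number of points
of the tangent line that are not good. -/
theorem tangent_bound [CharP K 2] {B : Set (V4 K)} (hC : IsCone B) (hB : IsBlocking B)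
    {r : ℕ} (hr : numPts B ≤ Fintype.card K ^ 2 + 1 + r) (he : (0, 0, 0, 1) ∈ B)
    (hN : ∀ y : K, (0, 0, 1, y) ∉ B) :
    (∑ z, ∑ t, chi B (0, 1, z, t) ≤ r) ∧
    ∃ Y : Finset K, Fintype.card K ≤ Y.card + r ∧ ∀ y ∈ Y, IsGood B (0, 0, 1, y) := by
  let bad : Finset K := Finset.univ.filter fun y => ∃ s, ∑ l, chi B (1, y, l, s + l * y) ≠ 1
  have hline : ∀ y s : K, 1 ≤ ∑ l, chi B (1, y, l, s + l * y) := by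
    intro y s
    refine one_le_sum_chi ?_
    rcases hB (0, 0, 1, y) (1, y, 0, s) (by simp) (by
      simp [bform]; rw [CharTwo.add_self_eq_zero]) (by simp) with h | ⟨t, ht⟩
    · exact absurd h (hN y)
    · exact ⟨t, by simpa using ht⟩
  have hy : ∀ y, Fintype.card K + (if y ∈ bad then 1 else 0) ≤
      ∑ s, ∑ l, chi B (1, y, l, s + l * y) := by
    intro y
    have h1 : ∑ s : K, 1 ≤ ∑ s, ∑ l, chi B (1, y, l, s + l * y) :=
      Finset.sum_le_sum fun s _ => hline y s
    have h2 : Fintype.card K = ∑ s : K, 1 := by simp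
    split_ifs with hb
    · obtain ⟨s, hs⟩ := (Finset.mem_filter.1 hb).2
      rw [h2]
      refine Nat.succ_le_of_lt (Finset.sum_lt_sum (fun s _ => hline y s) ⟨s, Finset.mem_univ s, ?_⟩)
      exact lt_of_le_of_ne (hline y s) (Ne.symm hs)
    · omega
  have hsum := Finset.sum_le_sum fun y (_ : y ∈ Finset.univ) => hy y
  rw [Finset.sum_add_distrib, Finset.sum_const, Finset.card_univ, smul_eq_mul,
    Finset.sum_ite_mem, Finset.univ_inter, ← Finset.card_eq_sum_ones, ← sq] at hsum
  rw [numPts_eq, chi_of_mem he] at hr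
  refine ⟨by omega, badᶜ, ?_, ?_⟩
  · rw [Finset.card_compl]
    have : bad.card ≤ r := by omega
    omega
  · intro y hyb
    have hgood : ∀ s, ∃! l, ((1, y, l, s + l * y) : V4 K) ∈ B := by
      intro s
      rw [← sum_chi_eq_one_iff]
      by_contra hs
      exact Finset.mem_compl.1 hyb (Finset.mem_filter.2 ⟨Finset.mem_univ _, s, hs⟩)
    refine ⟨hN y, ?_⟩
    rintro ⟨c, y', z, t⟩ hw hne
    have hy' : y' = c * y := by
      simp only [bform, mul_zero, mul_one, zero_add, add_zero] at hw
      exact (CharTwo.add_eq_zero.1 hw).symm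
    subst hy'
    have hsm : ∀ τ : K, (c, c * y, z, t) + τ • ((0, 0, 1, y) : V4 K) =
        (c, c * y, z + τ, t + τ * y) := fun τ => by simp
    simp only [hsm]
    by_cases hc : c = 0
    · subst hc
      simp only [zero_mul] at hne ⊢
      have hzt : t + z * y ≠ 0 := by
        intro h0
        refine hne z ?_
        rw [CharTwo.add_eq_zero.1 h0]; simp
      refine ⟨z, ?_, ?_⟩
      · beta_reduce
        rw [CharTwo.add_self_eq_zero, ← hC.2 _ _ (inv_ne_zero hzt)]
        simpa [hzt] using he
      · intro τ hτ
        by_contra hτz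
        have h1 : z + τ ≠ 0 := fun h => hτz (CharTwo.add_eq_zero.1 h).symm
        rw [← hC.2 _ _ (inv_ne_zero h1)] at hτ
        refine hN ((z + τ)⁻¹ * (t + τ * y)) ?_
        simpa [h1] using hτ
    · obtain ⟨l, hl, hlu⟩ := hgood (c⁻¹ * (t + z * y))
      have hiff : ∀ τ, ((c, c * y, z + τ, t + τ * y) : V4 K) ∈ B ↔
          ((1, y, c⁻¹ * (z + τ), c⁻¹ * (t + z * y) + c⁻¹ * (z + τ) * y) : V4 K) ∈ B := by
        intro τ
        rw [← hC.2 _ _ (inv_ne_zero hc)]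
        have h3 : c⁻¹ * (t + z * y) + c⁻¹ * (z + τ) * y = c⁻¹ * (t + τ * y) := by
          have : c⁻¹ * (t + z * y) + c⁻¹ * (z + τ) * y =
            c⁻¹ * (t + τ * y) + c⁻¹ * (z * y + z * y) := by ring
          rw [this, CharTwo.add_self_eq_zero, mul_zero, add_zero]
        rw [h3]
        simp [hc]
      refine ⟨c * l + z, ?_, ?_⟩
      · have h4 : c⁻¹ * (z + (c * l + z)) = l := by
          rw [show z + (c * l + z) = c * l + (z + z) by ring, CharTwo.add_self_eq_zero, add_zero,
            inv_mul_cancel_left₀ hc]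
        simp only [hiff, h4]
        exact hl
      · intro τ hτ
        have := hlu _ ((hiff τ).1 hτ)
        rw [← this, mul_inv_cancel_left₀ hc, add_right_comm, CharTwo.add_self_eq_zero, zero_add]

/-- The coordinate-free form of `tangent_bound` for the tangent line `⟨Q, x⟩` at `Q`. -/
theorem exists_tangent_frame [CharP K 2] {B : Set (V4 K)} (hC : IsCone B) (hB : IsBlocking B)
    {r : ℕ} (hr : numPts B ≤ Fintype.card K ^ 2 + 1 + r) {Q x : V4 K} (hQ : Q ∈ B)
    (hQx : bform Q x = 0) (hx : ∀ a : K, x ≠ a • Q) (hN : ∀ y : K, x + y • Q ∉ B) :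
    ∃ M : V4 K ≃ₗ[K] V4 K, IsIsom M ∧ M (0, 0, 0, 1) = Q ∧ M (0, 0, 1, 0) = x ∧
      (∑ z, ∑ t, chi (M ⁻¹' B) (0, 1, z, t) ≤ r) ∧
      ∃ Y : Finset K, Fintype.card K ≤ Y.card + r ∧ ∀ y ∈ Y, IsGood B (x + y • Q) := by
  have hQ0 : Q ≠ 0 := fun h => hC.1 (h ▸ hQ)
  have hx0 : x ≠ 0 := fun h => hx 0 (by rw [h, zero_smul])
  obtain ⟨M, hM, h1, h2⟩ := exists_isom_of_pair hQx hx0 (ne_smul_of_tangent hQ0 hx)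
  have hMX : ∀ y : K, M (0, 0, 1, y) = x + y • Q := by
    intro y
    rw [← h1, ← h2, ← map_smul, ← map_add]; simp
  obtain ⟨h3, Y, hY, hg⟩ := tangent_bound (hC.preimage M) (hB.preimage hM)
    (by rwa [numPts_preimage hC]) (by rw [Set.mem_preimage, h1]; exact hQ)
    (fun y => by rw [Set.mem_preimage, hMX]; exact hN y)
  exact ⟨M, hM, h1, h2, h3, Y, hY, fun y hy => hMX y ▸ (hg y hy).of_preimage hM⟩

theorem sum_plane (φ : K → K → ℕ) : ∑ c, ∑ t, φ c t =
    φ 0 0 + ∑ k ∈ Finset.univ.erase 0, (φ 0 k + ∑ a, φ k (k * a)) := by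
  rw [← Finset.add_sum_erase _ _ (Finset.mem_univ (0 : K)),
    ← Finset.add_sum_erase _ (φ 0) (Finset.mem_univ (0 : K)), Finset.sum_add_distrib, add_assoc]
  congr 2
  refine Finset.sum_congr rfl fun k hk => ?_
  exact (Equiv.sum_comp (Equiv.mulLeft₀ k (Finset.ne_of_mem_erase hk)) (φ k)).symm

theorem sum_erase_zero_const (n : ℕ) :
    ∑ _k ∈ Finset.univ.erase (0 : K), n = (Fintype.card K - 1) * n := by
  rw [Finset.sum_const, Finset.card_erase_of_mem (Finset.mem_univ _), Finset.card_univ, smul_eq_mul]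

/-- The dual grid bound: the `(q + 1)²` lines joining a point of the hyperbolic line
`⟨(0,0,0,1), (1,0,0,0)⟩` to a point of `⟨(0,0,1,0), (0,1,0,0)⟩` are totally isotropic and cover
every point off these two lines once and every point on them `q + 1` times. -/
theorem grid_bound {B : Set (V4 K)} (hC : IsCone B) (hB : IsBlocking B) :
    (Fintype.card K + 1) ^ 2 ≤ Fintype.card K *
      ((chi B (0, 0, 0, 1) + ∑ t, chi B (1, 0, 0, t)) +
        (chi B (0, 0, 1, 0) + ∑ b, chi B (0, 1, b, 0))) + numPts B := by
  let A : K → K → ℕ := fun c t => ∑ y, ∑ z, chi B (c, y, z, t)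
  set Y := chi B (0, 0, 1, 0) + ∑ b, chi B (0, 1, b, 0) with hY
  have hq := card_pos_sub (K := K)
  have key : ∀ (a : K) (v : V4 K), a ≠ 0 → chi B (a • v) = chi B v := fun a v ha => chi_smul hC ha v
  have hA : ∀ c t, A c t = chi B (c, 0, 0, t) +
      ∑ k ∈ Finset.univ.erase 0, (chi B (c, 0, k, t) + ∑ b, chi B (c, k, k * b, t)) :=
    fun c t => sum_plane fun y z => chi B (c, y, z, t)
  have hAs : ∀ k c t, k ≠ 0 → A (k * c) (k * t) = A c t := by
    intro k c t hk
    change ∑ y, ∑ z, chi B (k * c, y, z, k * t) = ∑ y, ∑ z, chi B (c, y, z, t)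
    rw [← Equiv.sum_comp (Equiv.mulLeft₀ k hk)]
    refine Finset.sum_congr rfl fun y _ => ?_
    rw [← Equiv.sum_comp (Equiv.mulLeft₀ k hk)]
    refine Finset.sum_congr rfl fun z _ => ?_
    rw [← key k (c, y, z, t) hk]; simp
  have hA0 : A 0 0 = (Fintype.card K - 1) * Y := by
    rw [hA, ← sum_erase_zero_const, chi_of_not_mem (show ((0, 0, 0, 0) : V4 K) ∉ B from hC.1),
      zero_add]
    refine Finset.sum_congr rfl fun k hk => ?_
    have hk := Finset.ne_of_mem_erase hk
    rw [hY, ← key k (0, 0, 1, 0) hk]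
    congr 1
    · simp
    · refine Finset.sum_congr rfl fun b _ => ?_
      rw [← key k (0, 1, b, 0) hk]; simp
  have htot : (Fintype.card K - 1) * numPts B =
      (Fintype.card K - 1) * (Y + (A 0 1 + ∑ a, A 1 a)) := by
    have h1 : ∑ v, chi B v = ∑ c, ∑ t, A c t := by
      simp only [Fintype.sum_prod_type, A]
      refine Finset.sum_congr rfl fun c _ => ?_
      rw [Finset.sum_comm]
      conv_rhs => rw [Finset.sum_comm]
      rw [Finset.sum_comm]
      refine Finset.sum_congr rfl fun y _ => ?_
      exact Finset.sum_comm
    rw [← sum_chi hC, h1, sum_plane, hA0, Nat.mul_add _ Y,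
      ← sum_erase_zero_const (A 0 1 + ∑ a, A 1 a)]
    congr 1
    refine Finset.sum_congr rfl fun k hk => ?_
    have hk := Finset.ne_of_mem_erase hk
    rw [← hAs k 0 1 hk]
    congr 1
    · simp
    · refine Finset.sum_congr rfl fun b _ => ?_
      rw [← hAs k 1 b hk]; simp
  have hNP := Nat.eq_of_mul_eq_mul_left hq htot
  have hjoin : ∀ p s : V4 K, s ≠ 0 → bform s p = 0 → (∀ a : K, p ≠ a • s) →
      1 ≤ chi B p + chi B s + ∑ k ∈ Finset.univ.erase (0 : K), chi B (p + k • s) := by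
    intro p s hs hps hne
    rcases hB s p hs hps hne with h | ⟨k, hk⟩
    · rw [chi_of_mem h]; omega
    · rcases eq_or_ne k 0 with rfl | h0
      · rw [zero_smul, add_zero] at hk
        rw [chi_of_mem hk]; omega
      · have := Finset.single_le_sum (f := fun k => chi B (p + k • s)) (fun _ _ => Nat.zero_le _)
          (Finset.mem_erase.2 ⟨h0, Finset.mem_univ k⟩)
        rw [chi_of_mem hk] at this
        omega
  have hpt : ∀ c t : K, (c, t) ≠ 0 →
      Fintype.card K + 1 ≤ Fintype.card K * chi B (c, 0, 0, t) + Y + A c t := by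
    intro c t hct
    have hne : ∀ s : V4 K, s.1 = 0 → s.2.2.2 = 0 → ∀ a : K, ((c, 0, 0, t) : V4 K) ≠ a • s := by
      intro s h1 h2 a h
      refine hct (Prod.ext ?_ ?_)
      · have := congrArg (fun v : V4 K => v.1) h
        simpa [h1] using this
      · have := congrArg (fun v : V4 K => v.2.2.2) h
        simpa [h2] using this
    have j1 := hjoin (c, 0, 0, t) (0, 0, 1, 0) (by simp) (by simp [bform]) (hne _ rfl rfl)
    have j2 : ∀ b : K, _ := fun b => hjoin (c, 0, 0, t) (0, 1, b, 0) (by simp) (by simp [bform])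
      (hne _ rfl rfl)
    have j3 := Finset.sum_le_sum fun b (_ : b ∈ Finset.univ) => j2 b
    simp only [Prod.smul_mk, Prod.mk_add_mk, smul_eq_mul, mul_zero, mul_one, add_zero, zero_add,
      Finset.sum_add_distrib, Finset.sum_const, Finset.card_univ] at j1 j3
    rw [Finset.sum_comm] at j3
    rw [hA, Finset.sum_add_distrib, hY]
    linarith
  have h1 := hpt 0 1 (by simp)
  have h2 := Finset.sum_le_sum fun t (_ : t ∈ Finset.univ) => hpt 1 t (by simp)
  simp only [Finset.sum_add_distrib, Finset.sum_const, Finset.card_univ, smul_eq_mul,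
    ← Finset.mul_sum] at h2
  rw [hNP]
  linarith

end Count

/-! ### The plane of a good point -/

section Star
variable {K : Type*} [Field K] [Fintype K] [CharP K 2]

/-- `grid_bound` for the symplectic basis `(1,μ,l,0), (0,1,0,l), (0,0,1,μ), (0,0,0,1)`. -/
theorem grid_bound_shift {B : Set (V4 K)} (hC : IsCone B) (hB : IsBlocking B)
    {r : ℕ} (hr : numPts B ≤ Fintype.card K ^ 2 + 1 + r) (hrq : r < Fintype.card K)
    (he : (0, 0, 0, 1) ∉ B) (l μ : K) :
    2 ≤ (∑ b, chi B (0, 1, b, l + b * μ)) + chi B (0, 0, 1, μ) + ∑ t, chi B (1, μ, l, t) := by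
  obtain ⟨M, hM, hv⟩ := exists_isom (f := ((1, μ, l, 0) : V4 K)) (g := (0, 1, 0, l))
    (h := (0, 0, 1, μ)) (e := (0, 0, 0, 1)) (by simp [bform]) (by simp [bform]) (by simp [bform])
    (by simp [bform]) (by simp [bform]; exact CharTwo.add_self_eq_zero _)
    (by simp [bform]; exact CharTwo.add_self_eq_zero _)
  have h := grid_bound (hC.preimage M) (hB.preimage hM)
  rw [numPts_preimage hC] at h
  have hc : ∀ v, chi (M ⁻¹' B) v = chi B (M v) := fun v => rfl
  simp only [hc, hv, Prod.smul_mk, Prod.mk_add_mk, smul_eq_mul, mul_zero, mul_one, add_zero,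
    zero_add, zero_mul, one_mul, chi_of_not_mem he] at h
  by_contra hlt
  have hle : (∑ t, chi B (1, μ, l, t)) +
      (chi B (0, 0, 1, μ) + ∑ b, chi B (0, 1, b, l + b * μ)) ≤ 1 := by omega
  have := Nat.mul_le_mul_left (Fintype.card K) hle
  nlinarith

/-- If `⟨(0,0,0,1)⟩` is a good point and `(0,0,1,0) ∈ B`, then the points `(0,1,a,f a)` of `B` in
the plane orthogonal to it form, with `(0,0,1,0)`, a set of `q + 1` points. If `f` is not bijective,
`grid_bound_shift` summed over the lines of the plane off `(0,0,0,1)` shows that fewer than half of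
the points `(0,1,a,f a)` lie on a line with three points of the set, so that `f` has a zero by
`exists_zero_of_nuclei`. -/
theorem star_coord {B : Set (V4 K)} (hC : IsCone B) (hB : IsBlocking B) (he : Even (Fintype.card K))
    {r : ℕ} (hr : numPts B ≤ Fintype.card K ^ 2 + 1 + r) (hr0 : 0 < r) (hrq : 6 * r ≤ Fintype.card K)
    (hX : IsGood B (0, 0, 0, 1)) (hQ : (0, 0, 1, 0) ∈ B) : ∃ a : K, (0, 1, a, 0) ∈ B := by
  have hf : ∀ a : K, ∃ s : K, ∀ t, ((0, 1, a, t) : V4 K) ∈ B ↔ t = s := by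
    intro a
    obtain ⟨s, hs, hu⟩ := hX.2 (0, 1, a, 0) (by simp [bform]) (by simp)
    simp only [Prod.smul_mk, Prod.mk_add_mk, smul_eq_mul, mul_zero, mul_one, add_zero,
      zero_add] at hs hu
    exact ⟨s, fun t => ⟨hu t, fun h => h ▸ hs⟩⟩
  choose f hf using hf
  have hE : ∀ t : K, ((0, 0, 1, t) : V4 K) ∈ B ↔ t = 0 := by
    obtain ⟨s, hs, hu⟩ := hX.2 (0, 0, 1, 0) (by simp [bform]) (by simp)
    simp only [Prod.smul_mk, Prod.mk_add_mk, smul_eq_mul, mul_zero, mul_one, add_zero,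
      zero_add] at hs hu
    exact fun t => ⟨fun h => (hu t h).trans (hu 0 hQ).symm, fun h => h ▸ hQ⟩
  simp only [hf]
  by_cases hinj : Function.Injective f
  · obtain ⟨a, ha⟩ := (Finite.injective_iff_surjective.1 hinj) 0
    exact ⟨a, ha.symm⟩
  simp only [Function.Injective, not_forall] at hinj
  obtain ⟨a₁, a₂, ha, hane⟩ := hinj
  set q := Fintype.card K with hq
  let N : K → K → ℕ := fun l μ => ∑ b, chi B (0, 1, b, l + b * μ)
  let E : K → ℕ := fun μ => chi B (0, 0, 1, μ)
  let A : K → K → ℕ := fun l μ => ∑ t, chi B (1, μ, l, t)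
  have hN : ∀ l μ, N l μ = (Finset.univ.filter fun b => l + b * μ = f b).card := by
    intro l μ
    simp only [N, chi, hf, Finset.sum_boole, Nat.cast_id]
  have h2 : ∀ l μ, 2 ≤ N l μ + E μ + A l μ := fun l μ =>
    grid_bound_shift hC hB hr (by omega) hX.1 l μ
  have hE0 : E 0 = 1 := chi_of_mem hQ
  have hN0 : 2 ≤ N (f a₁) 0 := by
    rw [hN, ← Finset.card_pair hane]
    refine Finset.card_le_card fun x hx => ?_
    rcases Finset.mem_insert.1 hx with rfl | hx
    · simp
    · rw [Finset.mem_singleton.1 hx]; simp [ha]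
  have hone : ∀ a, ∑ t, chi B (0, 1, a, t) = 1 := fun a => by simp [chi, hf]
  have hsumN : ∑ l, ∑ μ, N l μ = q * q := by
    have : ∀ μ, ∑ l, N l μ = q := by
      intro μ
      simp only [N]
      rw [Finset.sum_comm]
      have : ∀ b, ∑ l, chi B (0, 1, b, l + b * μ) = 1 := fun b => by
        rw [← hone b]
        exact Equiv.sum_comp (Equiv.addRight (b * μ)) (fun t => chi B (0, 1, b, t))
      simp [this, hq]
    rw [Finset.sum_comm]
    simp [this, hq]
  have hsumE : ∑ μ, E μ = 1 := by simp [E, chi, hE]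
  have hsumA : ∑ l, ∑ μ, A l μ + q + 1 ≤ q ^ 2 + 1 + r := by
    refine le_trans (le_of_eq ?_) hr
    rw [Finset.sum_comm, numPts, chi_of_not_mem hX.1]
    simp only [hone, Finset.sum_const, Finset.card_univ, smul_eq_mul, mul_one, add_zero]
    change _ = _ + _ + ∑ μ, E μ
    rw [hsumE]
  -- `w l μ` counts the affine points on the line `(l, μ)` if that line has three points of the set.
  let w : K → K → ℕ := fun l μ => if 3 ≤ N l μ + E μ then N l μ else 0
  -- The extra term `1` comes from the line with `μ = 0` through `a₁`, `a₂` and the point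
  -- `(0,0,1,0)`; it makes the final count strict enough.
  have hw : ∀ l μ, w l μ + (if l = f a₁ then if μ = 0 then 1 else 0 else 0) + 6 ≤
      3 * (N l μ + E μ + A l μ) := by
    intro l μ
    have := h2 l μ
    have hE1 : μ ≠ 0 → E μ = 0 := fun h => chi_of_not_mem (by rwa [hE])
    simp only [w]
    by_cases hμ : μ = 0
    · subst hμ
      rw [hE0] at this ⊢
      by_cases hl : l = f a₁
      · subst hl
        rw [if_pos (by omega), if_pos rfl, if_pos rfl]; omega
      · rw [if_neg hl]; split_ifs <;> omega
    · rw [hE1 hμ] at this ⊢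
      rw [if_neg hμ, ite_self]; split_ifs <;> omega
  have hsum := Finset.sum_le_sum fun l (_ : l ∈ Finset.univ) =>
    Finset.sum_le_sum fun μ (_ : μ ∈ Finset.univ) => hw l μ
  simp only [← Finset.mul_sum, Finset.sum_add_distrib, hsumN, hsumE, Finset.sum_const,
    Finset.card_univ, smul_eq_mul, mul_one, ← hq] at hsum
  have hone' : ∑ l : K, ∑ μ : K, (if l = f a₁ then if μ = 0 then 1 else 0 else 0) = 1 := by
    rw [Finset.sum_eq_single (f a₁)] <;> simp +contextual
  rw [hone'] at hsum
  let bad : Finset K := Finset.univ.filter fun u => ¬ Function.Injective (slopeAt f u)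
  have hbad : bad.card ≤ ∑ l, ∑ μ, w l μ := by
    have e1 : ∑ l, ∑ μ, w l μ =
        ∑ b, ∑ l, ∑ μ, if 3 ≤ N l μ + E μ then chi B (0, 1, b, l + b * μ) else 0 := by
      symm
      rw [Finset.sum_comm]
      refine Finset.sum_congr rfl fun l _ => ?_
      rw [Finset.sum_comm]
      refine Finset.sum_congr rfl fun μ _ => ?_
      simp only [w]
      split_ifs
      · rfl
      · simp
    have e2 : bad.card = ∑ b, if b ∈ bad then 1 else 0 := by simp
    rw [e1, e2]
    refine Finset.sum_le_sum fun b _ => ?_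
    split_ifs with hb
    swap
    · exact Nat.zero_le _
    have hb := (Finset.mem_filter.1 hb).2
    simp only [Function.Injective, not_forall] at hb
    obtain ⟨x, x', hxx, hne⟩ := hb
    obtain ⟨μ, hμ⟩ : ∃ μ, μ = slopeAt f b x := ⟨_, rfl⟩
    obtain ⟨l, hl⟩ : ∃ l, l = f b - b * μ := ⟨_, rfl⟩
    have hbl : l + b * μ = f b := by rw [hl]; ring
    have hon : ∀ v, slopeAt f b v = μ → l + v * μ = f v := by
      intro v hv
      rcases eq_or_ne v b with rfl | hvb
      · exact hbl
      · have : v - b ≠ 0 := sub_ne_zero.2 hvb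
        rw [slopeAt, ← div_eq_mul_inv, div_eq_iff this] at hv
        rw [hl]; linear_combination -hv
    have hx := hon x hμ.symm
    have hx' := hon x' (hxx ▸ hμ.symm)
    have h3 : 3 ≤ N l μ + E μ := by
      by_cases hbx : b = x ∨ b = x'
      · have hμ0 : μ = 0 := by
          rcases hbx with rfl | rfl
          · rw [hμ]; simp [slopeAt]
          · rw [hμ, hxx]; simp [slopeAt]
        have : 2 ≤ N l μ := by
          rw [hN, ← Finset.card_pair hne]
          refine Finset.card_le_card fun v hv => ?_
          rcases Finset.mem_insert.1 hv with rfl | hv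
          · simpa using hx
          · rw [Finset.mem_singleton.1 hv]; simpa using hx'
        rw [hμ0] at this ⊢
        omega
      · push Not at hbx
        have : 3 ≤ N l μ := by
          rw [hN, ← Finset.card_eq_three.2 ⟨b, x, x', hbx.1, hbx.2, hne, rfl⟩]
          refine Finset.card_le_card fun v hv => ?_
          simp only [Finset.mem_insert, Finset.mem_singleton] at hv
          rcases hv with rfl | rfl | rfl <;> simpa
        omega
    calc 1 = (if 3 ≤ N l μ + E μ then chi B (0, 1, b, l + b * μ) else 0) := by
          rw [if_pos h3, chi_of_mem ((hf _ _).2 hbl)]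
      _ ≤ ∑ μ, (if 3 ≤ N l μ + E μ then chi B (0, 1, b, l + b * μ) else 0) :=
          Finset.single_le_sum (f := fun μ => if 3 ≤ N l μ + E μ then chi B (0, 1, b, l + b * μ)
            else 0) (fun _ _ => Nat.zero_le _) (Finset.mem_univ μ)
      _ ≤ _ :=
          Finset.single_le_sum (f := fun l => ∑ μ, if 3 ≤ N l μ + E μ then
            chi B (0, 1, b, l + b * μ) else 0) (fun _ _ => Nat.zero_le _) (Finset.mem_univ l)
  obtain ⟨a, ha⟩ := exists_zero_of_nuclei (by omega) he f badᶜ (by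
    rw [Finset.card_compl, ← hq]
    have : 3 * (q * q) = 3 * q ^ 2 := by ring
    have : q * (q * 6) = 6 * q ^ 2 := by ring
    omega) (fun u hu => by
      by_contra h
      exact Finset.mem_compl.1 hu (Finset.mem_filter.2 ⟨Finset.mem_univ _, h⟩))
  exact ⟨a, ha.symm⟩

/-- Coordinate-free form of `star_coord`. -/
theorem star_of_isGood {B : Set (V4 K)} (hC : IsCone B) (hB : IsBlocking B) (he : Even (Fintype.card K))
    {r : ℕ} (hr : numPts B ≤ Fintype.card K ^ 2 + 1 + r) (hr0 : 0 < r) (hrq : 6 * r ≤ Fintype.card K)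
    {X P Q : V4 K} (hX : IsGood B X) (hQ : Q ∈ B) (hXQ : bform X Q = 0) (hPQ : bform P Q = 0)
    (hXP : bform X P = 1) : ∃ R ∈ B, bform R X = 0 ∧ bform R P = 0 ∧ bform R Q = 1 := by
  obtain ⟨M, hM, h1, h2, h3⟩ := exists_isom_of_triple hXQ hPQ hXP (fun h => hC.1 (h ▸ hQ))
  obtain ⟨a, ha⟩ := star_coord (hC.preimage M) (hB.preimage hM) he (by rwa [numPts_preimage hC])
    hr0 hrq (IsGood.preimage hM (h1 ▸ hX)) (by rw [Set.mem_preimage, h2]; exact hQ)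
  refine ⟨M (0, 1, a, 0), ha, ?_, ?_, ?_⟩
  · rw [← h1, hM]; simp [bform]
  · rw [← h3, hM]; simp [bform]
  · rw [← h2, hM]; simp [bform]

end Star

/-! ### Minimal blocking sets -/

section Minimal
variable {K : Type*} [Field K]

theorem IsCone.ne_zero {B : Set (V4 K)} (hC : IsCone B) {v : V4 K} (hv : v ∈ B) : v ≠ 0 :=
  fun h => hC.1 (h ▸ hv)

theorem mem_line_of_comb {B : Set (V4 K)} (hC : IsCone B) {u w : V4 K} {a b : K}
    (h : a • u + b • w ∈ B) : u ∈ B ∨ ∃ t : K, w + t • u ∈ B := by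
  by_cases hb : b = 0
  · subst hb
    rw [zero_smul, add_zero] at h
    have ha : a ≠ 0 := fun ha => hC.ne_zero h (by rw [ha, zero_smul])
    exact Or.inl ((hC.2 a u ha).1 h)
  · refine Or.inr ⟨b⁻¹ * a, ?_⟩
    rw [← hC.2 b _ hb, smul_add, smul_smul, mul_inv_cancel_left₀ hb, add_comm]
    exact h

/-- `B` is a minimal blocking set. -/
abbrev IsMinBlocking (B : Set (V4 K)) : Prop := Minimal (fun C => IsCone C ∧ IsBlocking C) B

/-- Every point of a minimal blocking set lies on a tangent line: otherwise it could be removed. -/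
theorem IsMinBlocking.exists_tangent [CharP K 2] {B : Set (V4 K)} (h : IsMinBlocking B) {Q : V4 K}
    (hQ : Q ∈ B) :
    ∃ x, bform Q x = 0 ∧ (∀ a : K, x ≠ a • Q) ∧ ∀ y : K, x + y • Q ∉ B := by
  by_contra! hcon
  obtain ⟨hC, hB⟩ := h.1
  have hQ0 := hC.ne_zero hQ
  let C : Set (V4 K) := {v | v ∈ B ∧ ∀ a : K, v ≠ a • Q}
  have hCC : IsCone C := by
    refine ⟨fun h => hC.1 h.1, fun a v ha => ?_⟩
    refine and_congr (hC.2 a v ha) (not_iff_not.1 ?_)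
    push Not
    constructor
    · rintro ⟨b, hb⟩
      exact ⟨a⁻¹ * b, by rw [mul_smul, ← hb, inv_smul_smul₀ ha]⟩
    · rintro ⟨b, hb⟩
      exact ⟨a * b, by rw [hb, smul_smul]⟩
  have hCB : IsBlocking C := by
    intro u w hu huw hw
    by_cases hs : ∃ a b : K, Q = a • u + b • w
    · obtain ⟨a, b, hab⟩ := hs
      by_cases huQ : ∃ k : K, u = k • Q
      · obtain ⟨k, hk⟩ := huQ
        have hk0 : k ≠ 0 := fun h => hu (by rw [hk, h, zero_smul])
        have hwQ : ∀ k : K, w ≠ k • Q := by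
          intro l hl
          refine hw (l * k⁻¹) ?_
          rw [hl, hk, smul_smul, inv_mul_cancel_right₀ hk0]
        obtain ⟨y, hy⟩ := hcon w (by
          rw [hab, bform_add_left, bform_smul_left, bform_smul_left, huw, bform_self]; ring) hwQ
        refine mem_line_of_comb hCC (a := y * a) (b := 1 + y * b) ?_
        have e : (y * a) • u + (1 + y * b) • w = w + y • Q := by rw [hab]; module
        rw [e]
        refine ⟨hy, fun l hl => hwQ (l - y) ?_⟩
        rw [sub_smul, ← hl, add_sub_cancel_right]
      · push Not at huQ
        obtain ⟨y, hy⟩ := hcon u (by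
          rw [hab, bform_add_left, bform_smul_left, bform_smul_left, bform_comm w, huw, bform_self]
          ring) huQ
        refine mem_line_of_comb hCC (a := 1 + y * a) (b := y * b) ?_
        have e : (1 + y * a) • u + (y * b) • w = u + y • Q := by rw [hab]; module
        rw [e]
        refine ⟨hy, fun l hl => huQ (l - y) ?_⟩
        rw [sub_smul, ← hl, add_sub_cancel_right]
    · push Not at hs
      have key : ∀ a b : K, ∀ l : K, a • u + b • w ∈ B → a • u + b • w ≠ l • Q := by
        intro a b l hm hl
        have hl0 : l ≠ 0 := fun h => hC.ne_zero hm (by rw [hl, h, zero_smul])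
        refine hs (l⁻¹ * a) (l⁻¹ * b) ?_
        rw [mul_smul, mul_smul, ← smul_add, hl, inv_smul_smul₀ hl0]
      rcases hB u w hu huw hw with h | ⟨t, ht⟩
      · refine Or.inl ⟨h, fun l => ?_⟩
        have := key 1 0 l
        simp only [one_smul, zero_smul, add_zero] at this
        exact this h
      · refine Or.inr ⟨t, ht, fun l => ?_⟩
        have := key t 1 l
        simp only [one_smul, add_comm (t • u)] at this
        exact this ht
  exact (h.2 ⟨hCC, hCB⟩ (fun v hv => hv.1) hQ).2 1 (one_smul _ _).symm

variable [Fintype K]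

/-- A small minimal blocking set is a partial ovoid.  Suppose `P`, `Q` are collinear points of `B`.
Every good point `x + y Q` of a tangent line at `Q` yields, by `star_of_isGood`, a point `R ∈ B`
collinear with `P` and satisfying `y = bform R x / bform R Q`.  So there are at least `q - r` points of `B`
collinear with `P`, but `tangent_bound` allows at most `r`. -/
theorem IsMinBlocking.eq_smul [CharP K 2] (he : Even (Fintype.card K)) {B : Set (V4 K)}
    (h : IsMinBlocking B) {r : ℕ} (hr : numPts B ≤ Fintype.card K ^ 2 + 1 + r) (hr0 : 0 < r)
    (hrq : 6 * r ≤ Fintype.card K) {P Q : V4 K} (hP : P ∈ B) (hQ : Q ∈ B) (hPQ : bform P Q = 0) :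
    ∃ a : K, P = a • Q := by
  by_contra! hne
  obtain ⟨hC, hB⟩ := h.1
  obtain ⟨x, hx1, hx2, hx3⟩ := h.exists_tangent hQ
  obtain ⟨x', hx1', hx2', hx3'⟩ := h.exists_tangent hP
  obtain ⟨M, hM, hMe, hMh, -, Y, hY, hgood⟩ := exists_tangent_frame hC hB hr hQ hx1 hx2 hx3
  obtain ⟨N, hN, hNe, hNh, hNr, -⟩ := exists_tangent_frame hC hB hr hP hx1' hx2' hx3'
  -- A vector of `B` orthogonal to a point and to its tangent line lies on that point.
  have hdec : ∀ (M : V4 K ≃ₗ[K] V4 K) (Q x R : V4 K), (∀ y : K, x + y • Q ∉ B) →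
      M (0, 0, 0, 1) = Q → M (0, 0, 1, 0) = x → R ∈ B → (M.symm R).1 = 0 → (M.symm R).2.1 = 0 →
      ∃ a : K, R = a • Q := by
    intro M Q x R hT hMe hMh hR h1 h2
    obtain ⟨⟨c, y, z, t⟩, hv⟩ : ∃ v, v = M.symm R := ⟨_, rfl⟩
    rw [← hv] at h1 h2
    simp only at h1 h2
    subst h1 h2
    have hR' : R = t • Q + z • x := by
      rw [← M.apply_symm_apply R, ← hv, ← hMe, ← hMh, ← map_smul, ← map_smul, ← map_add]; simp
    rcases mem_line_of_comb hC (hR' ▸ hR) with hQB | ⟨s, hs⟩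
    · by_cases hz : z = 0
      · exact ⟨t, by rw [hR', hz, zero_smul, add_zero]⟩
      · refine absurd hR ?_
        rw [hR', ← hC.2 _ _ (inv_ne_zero hz), smul_add, smul_smul, smul_smul, inv_mul_cancel₀ hz,
          one_smul, add_comm]
        exact hT _
    · exact absurd hs (hT s)
  have hb : bform x P ≠ 0 := by
    intro h0
    obtain ⟨a, ha⟩ := hdec M Q x P hx3 hMe hMh hP
      (by
        have : bform (0, 0, 0, 1) (M.symm P) = 0 := by
          rw [← hM, hMe, M.apply_symm_apply, bform_comm, hPQ]
        simpa [bform] using this)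
      (by
        have : bform (0, 0, 1, 0) (M.symm P) = 0 := by
          rw [← hM, hMh, M.apply_symm_apply, h0]
        simpa [bform] using this)
    exact hne a ha
  have hYr : Y ⊆ (Finset.univ.filter fun p : K × K => ((0, 1, p) : V4 K) ∈ N ⁻¹' B).image
      (fun p => bform (N (0, 1, p)) x / bform (N (0, 1, p)) Q) := by
    intro y hy
    obtain ⟨R, hR, hRX, hRP, hRQ⟩ := star_of_isGood hC hB he hr hr0 hrq (P := (bform x P)⁻¹ • P) (hgood y hy)
      hQ (by rw [bform_add_left, bform_smul_left, bform_self, bform_comm, hx1]; ring)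
      (by rw [bform_smul_left, hPQ, mul_zero])
      (by rw [bform_smul_right, bform_add_left, bform_smul_left, bform_comm Q, hPQ]; field_simp; ring)
    rw [bform_smul_right] at hRP
    have hRP : bform R P = 0 := by simpa [hb] using hRP
    rw [bform_add_right, bform_smul_right, hRQ, mul_one] at hRX
    have hRx : bform R x = y := CharTwo.add_eq_zero.1 hRX
    have hc : (N.symm R).1 = 0 := by
      have : bform (0, 0, 0, 1) (N.symm R) = 0 := by
        rw [← hN, hNe, N.apply_symm_apply, bform_comm, hRP]
      simpa [bform] using this
    have hd : (N.symm R).2.1 ≠ 0 := by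
      intro h0
      obtain ⟨a, ha⟩ := hdec N P x' R hx3' hNe hNh hR hc h0
      rw [ha, bform_smul_left, hPQ, mul_zero] at hRQ
      exact zero_ne_one hRQ
    obtain ⟨⟨c, d, m⟩, hv⟩ : ∃ v, v = N.symm R := ⟨_, rfl⟩
    rw [← hv] at hc hd
    simp only at hc hd
    subst hc
    have hRN : R = d • N (0, 1, d⁻¹ • m) := by
      rw [← map_smul, ← N.apply_symm_apply R, ← hv]
      simp [smul_smul, hd]
    rw [hRN, hC.2 d _ hd] at hR
    rw [hRN, bform_smul_left] at hRx hRQ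
    refine Finset.mem_image.2 ⟨d⁻¹ • m, Finset.mem_filter.2 ⟨Finset.mem_univ _, hR⟩, ?_⟩
    rw [← hRx, eq_comm, eq_div_iff (right_ne_zero_of_mul_eq_one hRQ), mul_right_comm, hRQ, one_mul]
  have hcard : (Finset.univ.filter fun p : K × K => ((0, 1, p) : V4 K) ∈ N ⁻¹' B).card ≤ r := by
    refine le_trans (le_of_eq ?_) hNr
    rw [← Fintype.sum_prod_type (f := fun p : K × K => chi (N ⁻¹' B) (0, 1, p))]
    simp only [chi, Finset.sum_boole, Nat.cast_id]
  have := (Finset.card_le_card hYr).trans (Finset.card_image_le.trans hcard)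
  omega

end Minimal

/-! ### The gap in the symplectic space -/

section Gap
variable {K : Type*} [Field K]

/-- Every point lies on a totally isotropic line. -/
theorem exists_orth [CharP K 2] {d : V4 K} (hd : d ≠ 0) :
    ∃ h, h ≠ 0 ∧ bform d h = 0 ∧ ∀ a : K, d ≠ a • h := by
  obtain ⟨c, y, z, t⟩ := d
  by_cases hc : c = 0
  · subst hc
    by_cases ht : t = 0
    · subst ht
      refine ⟨(0, 0, 0, 1), by simp, by simp [bform], fun a h => hd ?_⟩
      simp only [Prod.smul_mk, smul_eq_mul, mul_zero, Prod.mk.injEq] at h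
      rw [h.2.1, h.2.2.1]; rfl
    · refine ⟨(z, t, 0, 0), by simp [ht], ?_, fun a h => ?_⟩
      · simp only [bform]
        rw [mul_comm t z, mul_zero, mul_zero, add_zero, add_zero, CharTwo.add_self_eq_zero]
      · simp only [Prod.smul_mk, smul_eq_mul, mul_zero, Prod.mk.injEq] at h
        exact ht h.2.2.2
  · refine ⟨(0, c, 0, z), by simp [hc], ?_, fun a h => ?_⟩
    · simp only [bform]
      rw [mul_comm z c, mul_zero, mul_zero, zero_add, add_zero, CharTwo.add_self_eq_zero]
    · simp only [Prod.smul_mk, smul_eq_mul, mul_zero, Prod.mk.injEq] at h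
      exact hc h.1

variable [Fintype K]

/-- The number of points of `B` on the line `⟨u, w⟩`. -/
def lineCount (B : Set (V4 K)) (u w : V4 K) : ℕ := chi B u + ∑ t : K, chi B (w + t • u)

theorem lineCount_preimage (B : Set (V4 K)) (M : V4 K ≃ₗ[K] V4 K) (u w : V4 K) :
    lineCount (M ⁻¹' B) u w = lineCount B (M u) (M w) := by
  simp only [lineCount, chi, Set.mem_preimage, map_add, map_smul]

theorem sum_chi_plane (B : Set (V4 K)) (z : K) :
    chi B (0, 0, 0, 1) + ∑ t, chi B (0, 1, z, t) = lineCount B (0, 0, 0, 1) (0, 1, z, 0) := by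
  simp [lineCount]

/-- The pencil of lines through `(0,0,0,1)` and the lines meeting one of them elsewhere give the
parity of the number of points. -/
theorem odd_numPts [CharP K 2] (he : Even (Fintype.card K)) {B : Set (V4 K)}
    (h : ∀ u w : V4 K, u ≠ 0 → bform u w = 0 → (∀ a : K, w ≠ a • u) → Odd (lineCount B u w)) :
    Odd (numPts B) := by
  have h1 : Odd (chi B (0, 0, 0, 1) + ∑ y, chi B (0, 0, 1, y)) := by
    simpa [lineCount] using h (0, 0, 0, 1) (0, 0, 1, 0) (by simp) (by simp [bform]) (by simp)
  have heven : ∀ φ : K → ℕ, (∀ x, Even (φ x)) → Even (∑ x, φ x) := fun φ hφ =>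
    Finset.sum_induction _ Even (fun _ _ => Even.add) Even.zero fun x _ => hφ x
  have hconst : ∀ (φ : K → ℕ) (p : ℕ), (∀ x, Odd (p + φ x)) → Even (∑ x, φ x) := by
    intro φ p hφ
    have h1 : Even (∑ x, φ x + ∑ _x : K, (p + 1)) := by
      rw [← Finset.sum_add_distrib]
      refine heven _ fun x => ?_
      rw [← add_assoc, add_comm (φ x)]
      exact (hφ x).add_one
    have h2 : Even (∑ _x : K, (p + 1)) := by
      rw [Finset.sum_const, Finset.card_univ, smul_eq_mul]
      exact he.mul_right _
    exact (Nat.even_add.1 h1).2 h2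
  have h2 : Even (∑ z, ∑ t, chi B (0, 1, z, t)) := by
    refine hconst _ (chi B (0, 0, 0, 1)) fun z => ?_
    rw [sum_chi_plane]
    exact h _ _ (by simp) (by simp [bform]) (by simp)
  have h3 : Even (∑ y, ∑ s, ∑ l, chi B (1, y, l, s + l * y)) := by
    refine heven _ fun y => hconst _ (chi B (0, 0, 1, y)) fun s => ?_
    simpa [lineCount] using h (0, 0, 1, y) (1, y, 0, s) (by simp) (by
      simp [bform]; exact CharTwo.add_self_eq_zero _) (by simp)
  rw [numPts_eq]
  exact (h1.add_even h2).add_even h3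

/-- A minimal blocking set without distinct collinear points is an ovoid: it has one point on each
line and `q² + 1` points. -/
theorem IsMinBlocking.ovoid [CharP K 2] {B : Set (V4 K)} (h : IsMinBlocking B)
    (hcol : ∀ P ∈ B, ∀ Q ∈ B, bform P Q = 0 → ∃ a : K, P = a • Q) :
    (∀ u w : V4 K, u ≠ 0 → bform u w = 0 → (∀ a : K, w ≠ a • u) → lineCount B u w = 1) ∧
      numPts B = Fintype.card K ^ 2 + 1 := by
  obtain ⟨hC, hB⟩ := h.1
  have hline : ∀ u w : V4 K, u ≠ 0 → bform u w = 0 → (∀ a : K, w ≠ a • u) →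
      lineCount B u w = 1 := by
    intro u w hu huw hw
    unfold lineCount
    by_cases huB : u ∈ B
    · rw [chi_of_mem huB, Nat.add_eq_left]
      refine Finset.sum_eq_zero fun t _ => ?_
      rw [chi_eq_zero]
      intro ht
      obtain ⟨a, ha⟩ := hcol _ ht _ huB (by
        rw [bform_add_left, bform_smul_left, bform_self, bform_comm, huw]; ring)
      exact hw (a - t) (by rw [sub_smul, ← ha, add_sub_cancel_right])
    · rw [chi_of_not_mem huB, zero_add, sum_chi_eq_one_iff]
      obtain ⟨t, ht⟩ := (hB u w hu huw hw).resolve_left huB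
      refine ⟨t, ht, fun s hs => ?_⟩
      obtain ⟨a, ha⟩ := hcol _ hs _ ht (by
        simp only [bform_add_left, bform_add_right, bform_smul_left, bform_smul_right, bform_self,
          bform_comm w u, huw]; ring)
      have e : (1 - a) • w = (a * t - s) • u := by
        rw [sub_smul, one_smul, sub_eq_iff_eq_add, sub_smul, mul_smul]
        rw [smul_add] at ha
        rw [sub_add_eq_add_sub, eq_sub_iff_add_eq, ha, add_comm]
      by_cases ha1 : 1 - a = 0
      · rw [ha1, zero_smul, eq_comm, smul_eq_zero] at e
        have := e.resolve_right hu
        rw [← sub_eq_zero.1 ha1, one_mul] at this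
        exact (sub_eq_zero.1 this).symm
      · exact absurd (by rw [mul_smul, ← e, inv_smul_smul₀ ha1]) (hw ((1 - a)⁻¹ * (a * t - s)))
  refine ⟨hline, ?_⟩
  obtain ⟨Q, hQ⟩ : ∃ Q, Q ∈ B := by
    rcases hB (0, 0, 0, 1) (0, 0, 1, 0) (by simp) (by simp [bform]) (by simp) with h | ⟨t, ht⟩
    exacts [⟨_, h⟩, ⟨_, ht⟩]
  obtain ⟨x, hx1, hx2, hx3⟩ := h.exists_tangent hQ
  have hQ0 := hC.ne_zero hQ
  obtain ⟨M, hM, h1, h2⟩ := exists_isom_of_pair hx1 (fun h => hx2 0 (by rw [h, zero_smul]))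
    (ne_smul_of_tangent hQ0 hx2)
  have hline' : ∀ u w : V4 K, u ≠ 0 → bform u w = 0 → (∀ a : K, w ≠ a • u) →
      lineCount (M ⁻¹' B) u w = 1 := fun u w hu huw hw => by
    rw [lineCount_preimage]
    exact hline _ _ (by simpa using hu) (by rw [hM, huw])
      (fun a ha => hw a (M.injective (by rw [ha, map_smul])))
  have hMX : ∀ y : K, M (0, 0, 1, y) = x + y • Q := by
    intro y
    rw [← h1, ← h2, ← map_smul, ← map_add]; simp
  have he : chi (M ⁻¹' B) (0, 0, 0, 1) = 1 := chi_of_mem (by rw [Set.mem_preimage, h1]; exact hQ)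
  have hN : ∀ y, chi (M ⁻¹' B) (0, 0, 1, y) = 0 := fun y =>
    chi_of_not_mem (by rw [Set.mem_preimage, hMX]; exact hx3 y)
  have hz : ∀ z, ∑ t, chi (M ⁻¹' B) (0, 1, z, t) = 0 := by
    intro z
    have := hline' (0, 0, 0, 1) (0, 1, z, 0) (by simp) (by simp [bform]) (by simp)
    rw [← sum_chi_plane, he] at this
    omega
  have hs : ∀ y s, ∑ l, chi (M ⁻¹' B) (1, y, l, s + l * y) = 1 := by
    intro y s
    have := hline' (0, 0, 1, y) (1, y, 0, s) (by simp) (by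
      simp [bform]; exact CharTwo.add_self_eq_zero _) (by simp)
    simpa [lineCount, hN] using this
  rw [← numPts_preimage hC M, numPts_eq]
  simp only [he, hN, hz, hs, Finset.sum_const, Finset.card_univ, smul_eq_mul]
  ring

/-- A nonempty set meeting every line evenly has more than `q` points. -/
theorem card_lt_numPts_of_even [CharP K 2] {D : Set (V4 K)} (hC : IsCone D)
    (h : ∀ u w : V4 K, u ≠ 0 → bform u w = 0 → (∀ a : K, w ≠ a • u) → Even (lineCount D u w))
    {d : V4 K} (hd : d ∈ D) : Fintype.card K < numPts D := by
  obtain ⟨x, hx1, hx2, hx3⟩ := exists_orth (hC.ne_zero hd)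
  obtain ⟨M, hM, h1, -⟩ := exists_isom_of_pair hx2 hx1 hx3
  have he : chi (M ⁻¹' D) (0, 0, 0, 1) = 1 := chi_of_mem (by rw [Set.mem_preimage, h1]; exact hd)
  have hz : ∀ z, 1 ≤ ∑ t, chi (M ⁻¹' D) (0, 1, z, t) := by
    intro z
    have h0 : ∀ a : K, ((0, 1, z, 0) : V4 K) ≠ a • (0, 0, 0, 1) := by simp
    have := h (M (0, 0, 0, 1)) (M (0, 1, z, 0)) (by simp) (by rw [hM]; simp [bform])
      (fun a ha => h0 a (M.injective (by rw [ha, map_smul])))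
    rw [← lineCount_preimage, ← sum_chi_plane, he] at this
    rcases this with ⟨k, hk⟩
    omega
  have := Finset.sum_le_sum fun z (_ : z ∈ Finset.univ) => hz z
  rw [Finset.sum_const, Finset.card_univ, smul_eq_mul, mul_one] at this
  rw [← numPts_preimage hC M, numPts_eq, he]
  omega

/-- The weight gap in the symplectic model. -/
theorem symplectic_gap [CharP K 2] {B : Set (V4 K)} (hC : IsCone B)
    (h : ∀ u w : V4 K, u ≠ 0 → bform u w = 0 → (∀ a : K, w ≠ a • u) → Odd (lineCount B u w))
    {r : ℕ} (hr : numPts B = Fintype.card K ^ 2 + 1 + r) (hr0 : 0 < r) :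
    Fintype.card K + 4 ≤ 6 * r := by
  by_contra! hlt
  obtain ⟨n, hn, hcard⟩ := FiniteField.card K 2
  have he : Even (Fintype.card K) := by
    rw [hcard]
    exact Even.pow_of_ne_zero even_two n.ne_zero
  have hr2 : Even r := by
    have h1 := odd_numPts he h
    rw [hr, add_right_comm, Nat.odd_add_one, Nat.not_odd_iff_even, Nat.even_add] at h1
    exact h1.1 (he.pow_of_ne_zero two_ne_zero)
  obtain ⟨s, rfl⟩ := hr2
  have h4 : 4 ∣ Fintype.card K := by
    obtain ⟨m, hm⟩ : ∃ m, (n : ℕ) = m := ⟨_, rfl⟩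
    rw [hcard, hm] at hlt ⊢
    match m with
    | 0 => simp at hlt; omega
    | 1 => simp at hlt; omega
    | m + 2 => exact ⟨2 ^ m, by ring⟩
  have hrq : 6 * (s + s) ≤ Fintype.card K := by omega
  have hB : IsBlocking B := by
    intro u w hu huw hw
    by_contra! hcon
    have := h u w hu huw hw
    rw [lineCount, chi_of_not_mem hcon.1, Finset.sum_eq_zero fun t _ => chi_of_not_mem (hcon.2 t)]
      at this
    simp at this
  obtain ⟨O, hOB, hO⟩ := exists_minimal_le_of_wellFoundedLT (fun C => IsCone C ∧ IsBlocking C) B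
    ⟨hC, hB⟩
  have hO : IsMinBlocking O := hO
  obtain ⟨h1, h2⟩ := hO.ovoid fun P hP Q hQ hPQ =>
    hO.eq_smul he ((numPts_mono hOB).trans hr.le) hr0 hrq hP hQ hPQ
  have hOC := hO.1.1
  have hDC : IsCone (B \ O) := ⟨fun h => hC.1 h.1, fun a v ha =>
    and_congr (hC.2 a v ha) (not_congr (hOC.2 a v ha))⟩
  have hD := numPts_diff hOB
  have hDr : numPts (B \ O) = s + s := by omega
  have hcount : ∀ u w, lineCount (B \ O) u w + lineCount O u w = lineCount B u w := by
    intro u w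
    have : ∀ v, chi B v = chi (B \ O) v + chi O v := fun v => by
      by_cases hv : v ∈ O
      · simp [chi, hv, hOB hv]
      · simp [chi, hv]
    simp only [lineCount, this, Finset.sum_add_distrib]; ring
  obtain ⟨d, hd⟩ : (B \ O).Nonempty := by
    rw [Set.nonempty_iff_ne_empty]
    intro h0
    rw [h0] at hDr
    simp [numPts, chi] at hDr
    omega
  have := card_lt_numPts_of_even hDC (fun u w hu huw hw => by
    have h3 := h u w hu huw hw
    rw [← hcount, h1 u w hu huw hw, Nat.odd_add_one, Nat.not_odd_iff_even] at h3
    exact h3) hd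
  omega

end Gap

/-! ### Projection of the quadric from its nucleus -/

section Quadric
variable {K : Type*} [Field K] [Fintype K] [CharP K 2]

/-- The square root, the inverse of the Frobenius automorphism. -/
def sqrt2 : K ≃+* K := (frobeniusEquiv K 2).symm

theorem sqrt2_sq (a : K) : sqrt2 a ^ 2 = a := by
  have := (frobeniusEquiv K 2).apply_symm_apply a
  rwa [frobeniusEquiv_apply, frobenius_def] at this

theorem sq_sqrt2 (a : K) : sqrt2 (a ^ 2) = a := by
  have := (frobeniusEquiv K 2).symm_apply_apply a
  rwa [frobeniusEquiv_apply, frobenius_def] at this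

/-- The lift of a vector of the symplectic space to a singular vector of the quadric: the inverse
of the projection from the nucleus `(0,0,0,0,1)`. -/
def lift (v : V4 K) : Fin 5 → K :=
  ![v.2.2.2, v.1, v.2.1, v.2.2.1, sqrt2 (v.2.2.2 * v.1 + v.2.1 * v.2.2.1)]

/-- The projection of the quadric from its nucleus `(0,0,0,0,1)`. -/
def proj : (Fin 5 → K) →ₗ[K] V4 K where
  toFun w := (w 1, w 2, w 3, w 0)
  map_add' _ _ := rfl
  map_smul' _ _ := rfl

theorem proj_lift (v : V4 K) : proj (lift v) = v := rfl

theorem lift_proj {w : Fin 5 → K} (h : Q4Form K w = 0) : lift (proj w) = w := by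
  have h4 : sqrt2 (w 0 * w 1 + w 2 * w 3) = w 4 := by
    have : w 0 * w 1 + w 2 * w 3 = w 4 ^ 2 := CharTwo.add_eq_zero.1 h
    rw [this, sq_sqrt2]
  funext i
  fin_cases i
  · rfl
  · rfl
  · rfl
  · rfl
  · exact h4

theorem Q4Form_lift (v : V4 K) : Q4Form K (lift v) = 0 := by
  change v.2.2.2 * v.1 + v.2.1 * v.2.2.1 + sqrt2 (v.2.2.2 * v.1 + v.2.1 * v.2.2.1) ^ 2 = 0
  rw [sqrt2_sq, CharTwo.add_self_eq_zero]

theorem lift_smul (a : K) (v : V4 K) : lift (a • v) = a • lift v := by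
  have h4 : sqrt2 (a * v.2.2.2 * (a * v.1) + a * v.2.1 * (a * v.2.2.1)) =
      a * sqrt2 (v.2.2.2 * v.1 + v.2.1 * v.2.2.1) := by
    have : a * v.2.2.2 * (a * v.1) + a * v.2.1 * (a * v.2.2.1) =
      a ^ 2 * (v.2.2.2 * v.1 + v.2.1 * v.2.2.1) := by ring
    rw [this, map_mul, sq_sqrt2]
  funext i
  fin_cases i
  · rfl
  · rfl
  · rfl
  · rfl
  · exact h4

/-- The lift is additive on orthogonal vectors, because `sqrt2` is additive and the form `bform` is
the polarisation of `t c + y z`. -/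
theorem lift_add {v w : V4 K} (h : bform v w = 0) : lift (v + w) = lift v + lift w := by
  have h4 : sqrt2 ((v.2.2.2 + w.2.2.2) * (v.1 + w.1) + (v.2.1 + w.2.1) * (v.2.2.1 + w.2.2.1)) =
      sqrt2 (v.2.2.2 * v.1 + v.2.1 * v.2.2.1) + sqrt2 (w.2.2.2 * w.1 + w.2.1 * w.2.2.1) := by
    rw [← map_add]
    congr 1
    rw [bform] at h
    linear_combination h
  funext i
  fin_cases i
  · rfl
  · rfl
  · rfl
  · rfl
  · exact h4

theorem lift_ne_zero {v : V4 K} (hv : v ≠ 0) : lift v ≠ 0 := fun h =>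
  hv (by rw [← proj_lift v, h, map_zero])

theorem Q4Point.eq_span (P : Q4Point K) {v : V4 K} (hv : v ≠ 0) (h : lift v ∈ P.1) :
    P.1 = Submodule.span K {lift v} := by
  symm
  refine Submodule.eq_of_le_of_finrank_eq ?_ ?_
  · rwa [Submodule.span_singleton_le_iff_mem]
  · rw [finrank_span_singleton (lift_ne_zero hv), P.2.1]

theorem Q4Point.exists_lift (P : Q4Point K) : ∃ v : V4 K, v ≠ 0 ∧ lift v ∈ P.1 := by
  obtain ⟨x, hx0, -⟩ := finrank_eq_one_iff'.1 P.2.1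
  have hx := lift_proj (P.2.2 x x.2)
  refine ⟨proj x.1, fun h => hx0 ?_, hx.symm ▸ x.2⟩
  rw [h, ← zero_smul K (0 : V4 K), lift_smul, zero_smul] at hx
  exact Subtype.ext hx.symm

instance : Finite (Submodule K (Fin 5 → K)) :=
  Finite.of_injective (fun W => (W : Set (Fin 5 → K))) SetLike.coe_injective

instance : Finite (Q4Point K) := Subtype.finite

instance : Fintype (Q4Point K) := Fintype.ofFinite _

/-- The nonzero vectors on the points corresponding to `S` in the symplectic space. -/
def ptCone (S : Set (Q4Point K)) : Set (V4 K) := {v | v ≠ 0 ∧ ∃ P ∈ S, lift v ∈ P.1}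

theorem isCone_ptCone (S : Set (Q4Point K)) : IsCone (ptCone S) := by
  refine ⟨fun h => h.1 rfl, fun a v ha => and_congr (smul_ne_zero_iff_right ha) ?_⟩
  refine exists_congr fun P => and_congr_right fun _ => ?_
  rw [lift_smul, Submodule.smul_mem_iff _ ha]

theorem card_fibre (P : Q4Point K) :
    (Finset.univ.filter fun v : V4 K => v ≠ 0 ∧ lift v ∈ P.1).card = Fintype.card K - 1 := by
  obtain ⟨v, hv, hvP⟩ := P.exists_lift
  rw [← Finset.card_univ, ← Finset.card_erase_of_mem (Finset.mem_univ (0 : K)),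
    ← Finset.card_image_of_injective (Finset.univ.erase (0 : K)) (smul_left_injective K hv)]
  congr 1
  ext w
  simp only [Finset.mem_filter, Finset.mem_univ, true_and, Finset.mem_image, Finset.mem_erase,
    and_true]
  constructor
  · rintro ⟨hw, hwP⟩
    rw [P.eq_span hv hvP, Submodule.mem_span_singleton] at hwP
    obtain ⟨a, ha⟩ := hwP
    have haw : a • v = w := by
      rw [← proj_lift w, ← ha, map_smul, proj_lift]
    exact ⟨a, fun h => hw (by rw [← haw, h, zero_smul]), haw⟩
  · rintro ⟨a, ha, rfl⟩
    exact ⟨smul_ne_zero ha hv, by rw [lift_smul]; exact P.1.smul_mem a hvP⟩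

/-- The projection from the nucleus is a bijection from the points of the quadric to the points of
the symplectic space. -/
theorem numPts_ptCone (S : Set (Q4Point K)) : numPts (ptCone S) = S.ncard := by
  refine Nat.eq_of_mul_eq_mul_left (card_pos_sub (K := K)) ?_
  rw [← sum_chi (isCone_ptCone S)]
  have h1 : ∑ v, chi (ptCone S) v = (S.toFinset.biUnion fun P =>
      Finset.univ.filter fun v : V4 K => v ≠ 0 ∧ lift v ∈ P.1).card := by
    simp only [chi, Finset.sum_boole, Nat.cast_id]
    congr 1
    ext v
    simp only [Finset.mem_filter, Finset.mem_univ, true_and, Finset.mem_biUnion,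
      Set.mem_toFinset]
    change (v ≠ 0 ∧ ∃ P ∈ S, lift v ∈ P.1) ↔ _
    tauto
  rw [h1, Finset.card_biUnion, Finset.sum_congr rfl fun P _ => card_fibre P, Finset.sum_const,
    smul_eq_mul, mul_comm, Set.ncard_eq_toFinset_card']
  intro P _ P' _ hne
  rw [Function.onFun, Finset.disjoint_left]
  intro v hv hv'
  have h := (Finset.mem_filter.1 hv).2
  have h' := (Finset.mem_filter.1 hv').2
  exact hne (Subtype.ext ((P.eq_span h.1 h.2).trans (P'.eq_span h'.1 h'.2).symm))

/-- Orthogonal independent vectors span the projection of a line of the quadric. -/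
theorem exists_line {u w : V4 K} (hu : u ≠ 0) (huw : bform u w = 0) (hw : ∀ a : K, w ≠ a • u) :
    ∃ L : Q4Line K, ∀ v, lift v ∈ L.1 ↔ ∃ a b : K, a • u + b • w = v := by
  have hcomb : ∀ a b : K, lift (a • u + b • w) = a • lift u + b • lift w := by
    intro a b
    rw [lift_add (by rw [bform_smul_left, bform_smul_right, huw, mul_zero, mul_zero]), lift_smul,
      lift_smul]
  refine ⟨⟨Submodule.span K {lift u, lift w}, ?_, ?_⟩, ?_⟩
  · have hli : LinearIndependent K ![lift u, lift w] := by
      rw [LinearIndependent.pair_iff' (lift_ne_zero hu)]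
      intro a ha
      refine hw a ?_
      rw [← proj_lift w, ← ha, map_smul, proj_lift]
    have := finrank_span_eq_card hli
    rwa [Matrix.range_cons_cons_empty, Fintype.card_fin] at this
  · intro v hv
    obtain ⟨a, b, rfl⟩ := Submodule.mem_span_pair.1 hv
    rw [← hcomb, Q4Form_lift]
  · intro v
    rw [Submodule.mem_span_pair]
    refine exists_congr fun a => exists_congr fun b => ?_
    rw [← hcomb]
    exact ⟨fun h => by rw [← proj_lift v, ← h, proj_lift], fun h => by rw [h]⟩

/-- Totally isotropic lines of the symplectic space correspond to lines of the quadric with the same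
points. -/
theorem lineCount_ptCone (S : Set (Q4Point K)) {u w : V4 K} (hu : u ≠ 0) (huw : bform u w = 0)
    (hw : ∀ a : K, w ≠ a • u) :
    ∃ L : Q4Line K, lineCount (ptCone S) u w = Set.ncard {P : Q4Point K | P ∈ S ∧ P.1 ≤ L.1} := by
  obtain ⟨L, hL⟩ := exists_line hu huw hw
  refine ⟨L, ?_⟩
  have hw0 : w ≠ 0 := fun h => hw 0 (by rw [h, zero_smul])
  obtain ⟨M, hM, h1, h2⟩ := exists_isom_of_pair huw hw0 (ne_smul_of_tangent hu hw)
  rw [← numPts_ptCone, ← numPts_preimage (isCone_ptCone _) M]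
  have hmem : ∀ v, v ∈ ptCone {P : Q4Point K | P ∈ S ∧ P.1 ≤ L.1} ↔
      v ∈ ptCone S ∧ ∃ a b : K, a • u + b • w = v := by
    intro v
    rw [← hL]
    constructor
    · rintro ⟨hv, P, ⟨hP, hPL⟩, hvP⟩
      exact ⟨⟨hv, P, hP, hvP⟩, hPL hvP⟩
    · rintro ⟨⟨hv, P, hP, hvP⟩, hvL⟩
      refine ⟨hv, P, ⟨hP, ?_⟩, hvP⟩
      rwa [P.eq_span hv hvP, Submodule.span_singleton_le_iff_mem]
  have hc : ∀ c y z t : K, chi (M ⁻¹' ptCone {P : Q4Point K | P ∈ S ∧ P.1 ≤ L.1}) (c, y, z, t) =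
      if c = 0 ∧ y = 0 then chi (M ⁻¹' ptCone S) (0, 0, z, t) else 0 := by
    intro c y z t
    have hspan : (∃ a b : K, a • u + b • w = M (c, y, z, t)) ↔ c = 0 ∧ y = 0 := by
      have e : ∀ a b : K, a • u + b • w = M (0, 0, b, a) := by
        intro a b
        rw [← h1, ← h2, ← map_smul, ← map_smul, ← map_add]; simp
      simp only [e, M.injective.eq_iff, Prod.mk.injEq]
      constructor
      · rintro ⟨a, b, h, h', -⟩
        exact ⟨h.symm, h'.symm⟩
      · rintro ⟨h, h'⟩
        exact ⟨t, z, h.symm, h'.symm, rfl, rfl⟩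
    simp only [chi, Set.mem_preimage, hmem, hspan]
    by_cases h : c = 0 ∧ y = 0
    · obtain ⟨rfl, rfl⟩ := h; simp
    · simp [h]
  simp only [numPts, hc]
  have : lineCount (ptCone S) u w = lineCount (M ⁻¹' ptCone S) (0, 0, 0, 1) (0, 0, 1, 0) := by
    rw [lineCount_preimage, h1, h2]
  rw [this]
  simp [lineCount, add_comm]

/-- The gap theorem for point sets of the quadric: `symplectic_gap` applies to the complement of the
projection of `S`. -/
theorem quadric_gap (he : Even (Fintype.card K)) (S : Set (Q4Point K))
    (hS : ∀ L : Q4Line K, Even (Set.ncard {P : Q4Point K | P ∈ S ∧ P.1 ≤ L.1}))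
    (h1 : 6 * Fintype.card K ^ 3 + 5 * Fintype.card K - 4 < 6 * S.ncard) :
    Fintype.card K ^ 3 + Fintype.card K ≤ S.ncard := by
  by_contra! h2
  obtain ⟨r, hr⟩ := Nat.exists_eq_add_of_lt h2
  have hS0 := isCone_ptCone S
  let C : Set (V4 K) := {v | v ≠ 0}
  let B : Set (V4 K) := C \ ptCone S
  have hsub : ptCone S ⊆ C := fun v hv => hv.1
  have hB : IsCone B := ⟨fun h => h.1 rfl, fun a v ha =>
    and_congr (smul_ne_zero_iff_right ha) (not_congr (hS0.2 a v ha))⟩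
  have hBn : numPts B + numPts (ptCone S) = numPts C := numPts_diff hsub
  have hCn : numPts C = Fintype.card K ^ 3 + Fintype.card K ^ 2 + Fintype.card K + 1 := by
    simp only [numPts, chi, C, Set.mem_ofPred_eq, ne_eq, Prod.mk_eq_zero, one_ne_zero, false_and,
      and_false, not_false_eq_true, if_true, Finset.sum_const, Finset.card_univ, smul_eq_mul]
    ring
  rw [numPts_ptCone, hCn] at hBn
  have := symplectic_gap hB (r := r + 1) (fun u w hu huw hw => by
    obtain ⟨L, hL⟩ := lineCount_ptCone S hu huw hw
    have heven := hS L
    rw [← hL] at heven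
    have hcount : lineCount B u w + lineCount (ptCone S) u w = Fintype.card K + 1 := by
      have h3 : ∀ v, v ≠ 0 → chi B v + chi (ptCone S) v = 1 := fun v hv => by
        by_cases hvS : v ∈ ptCone S
        · simp [chi, B, hvS]
        · simp [chi, B, C, hvS, hv]
      have h4 : ∀ t : K, w + t • u ≠ 0 := fun t h => hw (-t) (by
        rw [neg_smul]; exact eq_neg_of_add_eq_zero_left h)
      calc lineCount B u w + lineCount (ptCone S) u w
          = (chi B u + chi (ptCone S) u) +
              ∑ t : K, (chi B (w + t • u) + chi (ptCone S) (w + t • u)) := by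
            simp only [lineCount, Finset.sum_add_distrib]; ring
        _ = _ := by simp only [h3 _ hu, h3 _ (h4 _)]; simp [add_comm]
    have hodd : Odd (lineCount B u w + lineCount (ptCone S) u w) := hcount ▸ he.add_one
    exact (Nat.odd_add.1 hodd).2 heven) (by omega) (Nat.succ_pos r)
  omega

end Quadric

/-- For `q` even there is no codeword of the dual binary code of points and lines of
`Q(4,q)` whose weight `w` satisfies `q^3 + (5q-4)/6 < w < q^3 + q` (the first inequality
written multiplied by 6); equivalently, no set of points meeting every line of `Q(4,q)`
evenly has size in that open interval. -/
theorem dual_code_Q4_weight_gap (q : ℕ) (hq : Fintype.card F = q) (hqe : Even q) :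
    (∀ c : Q4Point F → ZMod 2,
      (∀ L : Q4Line F, ∑ᶠ P ∈ {P : Q4Point F | P.1 ≤ L.1}, c P = 0) →
      ¬ (6 * q ^ 3 + 5 * q - 4 < 6 * Set.ncard {P : Q4Point F | c P ≠ 0} ∧
         Set.ncard {P : Q4Point F | c P ≠ 0} < q ^ 3 + q)) ∧
    (∀ S : Set (Q4Point F),
      (∀ L : Q4Line F, Even (Set.ncard {P : Q4Point F | P ∈ S ∧ P.1 ≤ L.1})) →
      ¬ (6 * q ^ 3 + 5 * q - 4 < 6 * S.ncard ∧ S.ncard < q ^ 3 + q)) := by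
  subst hq
  have : CharP F 2 :=
    ringChar.of_eq (FiniteField.even_card_iff_char_two.2 (Nat.even_iff.1 hqe))
  refine ⟨fun c hc h => ?_, fun S hS h => (quadric_gap hqe S hS h.1).not_gt h.2⟩
  refine (quadric_gap hqe {P | c P ≠ 0} (fun L => ?_) h.1).not_gt h.2
  have hz : ∀ x : ZMod 2, x = if x ≠ 0 then 1 else 0 := by decide
  refine ZMod.natCast_eq_zero_iff_even.1 (Eq.trans ?_ (hc L))
  rw [finsum_mem_eq_finite_toFinset_sum _ (Set.toFinite {P : Q4Point F | P.1 ≤ L.1}),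
    Finset.sum_congr rfl fun P _ => hz (c P), Finset.sum_boole, Set.ncard_eq_toFinset_card']
  congr 2
  ext P
  simp [and_comm]
end
end

section
/- Let q = p^h, p prime. The minimum weight d of the dual code of points and lines of the elliptic quadric generalised quadrangle Q^-(5,q) satisfies d <= 2(q^3 - q^2 + q), and the minimum weight d' of the dual code of points and lines of the Hermitian generalised quadrangle H(4,q^2) satisfies d' <= 2(q^5 - q^3 + q^2). -/
/-!
For a singular point `P` of the form, write `P^⊥` for its tangent hyperplane. Take two non-collinear
points `P₁`, `P₂` and let `c` be the indicator function of `P₁^⊥` minus that of `P₂^⊥`, on the points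
of the quadrangle. This is the cone codeword `P₁Q - P₂Q`, `Q` being the set of points collinear
with both, because the two indicators cancel on `Q`.

A line meets a hyperplane in a nonzero subspace, and every nonzero subspace has `1` modulo `p`
points (`card_points_below_cast`), so `c` sums to `1 - 1 = 0` over each line; no further property
of the quadrangle is used (`exists_codeword`). The support of `c` splits into the points of `P₁^⊥`
off `P₂^⊥` and conversely. After normalising coordinates, each half embeds in the zero set of the
form induced on `⟨P₁, P₂⟩^⊥`: a quaternary elliptic quadratic form, with at most
`q³ - q² + q` zeros (`ncard_elliptic_le`), or a ternary Hermitian form, with at most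
`q⁵ - q³ + q²` zeros (`card_hermitian_three`). The latter count rests on `x^(q+1) = -1` having at
least `q + 1` solutions in the field of order `q²`, which also supplies the points `P₁ = ⟨(1, t, 0, 0, 0)⟩` and
`P₂ = ⟨(1, s, 0, 0, 0)⟩`.
-/

open scoped Classical

noncomputable section

variable (F : Type*) [Field F] [Fintype F]
variable (K : Type*) [Field K] [Fintype K]

/-- An elliptic quadratic form `x₀x₁ + x₂x₃ + (x₄² + a·x₄x₅ + b·x₅²)` on `F^6`
(with `X² + aX + b` irreducible over `F`), defining `Q⁻(5,q)`. -/
def QelForm (a b : F) : (Fin 6 → F) → F := fun v =>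
  v 0 * v 1 + v 2 * v 3 + (v 4 ^ 2 + a * (v 4 * v 5) + b * v 5 ^ 2)

/-- Points of the elliptic quadric `Q⁻(5,q)`. -/
def QelPoint (a b : F) := {W : Submodule F (Fin 6 → F) //
  Module.finrank F W = 1 ∧ ∀ v ∈ W, QelForm F a b v = 0}

/-- Lines of the elliptic quadric `Q⁻(5,q)`. -/
def QelLine (a b : F) := {W : Submodule F (Fin 6 → F) //
  Module.finrank F W = 2 ∧ ∀ v ∈ W, QelForm F a b v = 0}

/-- The standard Hermitian form `∑ xⱼ^{q+1}` on `K^5` (`K = F_{q²}`), defining `H(4,q²)`. -/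
def H4Form (q : ℕ) : (Fin 5 → K) → K := fun v => ∑ j : Fin 5, v j ^ (q + 1)

/-- Points of the Hermitian variety `H(4,q²)`. -/
def H4Point (q : ℕ) := {W : Submodule K (Fin 5 → K) //
  Module.finrank K W = 1 ∧ ∀ v ∈ W, H4Form K q v = 0}

/-- Lines of the Hermitian variety `H(4,q²)`. -/
def H4Line (q : ℕ) := {W : Submodule K (Fin 5 → K) //
  Module.finrank K W = 2 ∧ ∀ v ∈ W, H4Form K q v = 0}

/-! ### Codewords from two hyperplanes -/

section General

variable {k V : Type*} [Field k] [AddCommGroup V] [Module k V]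

/-- A nonzero subspace of a finite vector space contains `1` modulo `p` projective points: the
number `N` of points satisfies `|U| = N (|k| - 1) + 1`, and `p` divides both `|U|` and `|k|`. -/
lemma card_points_below_cast (p : ℕ) [Finite k] [Finite V] [CharP k p] (U : Submodule k V)
    (hU : U ≠ ⊥) :
    ((Nat.card {W : Submodule k V // Module.finrank k W = 1 ∧ W ≤ U} : ℕ) : ZMod p) = 1 := by
  have := Fintype.ofFinite k
  have e : {W : Submodule k V // Module.finrank k W = 1 ∧ W ≤ U} ≃ Projectivization k U := by
    refine Equiv.trans ?_ (Projectivization.equivSubmodule k U).symm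
    -- the one-dimensional subspaces of `V` below `U` are those of `U` itself
    refine (Equiv.subtypeEquivRight fun W => and_comm).trans ?_
    refine (Equiv.subtypeSubtypeEquivSubtypeInter (· ≤ U)
      (fun W : Submodule k V => Module.finrank k W = 1)).symm.trans ?_
    refine ((Submodule.MapSubtype.orderIso U).toEquiv.subtypeEquiv fun W => ?_).symm
    change _ ↔ Module.finrank k (W.map U.subtype) = 1
    rw [← (Submodule.equivMapOfInjective U.subtype U.injective_subtype W).finrank_eq]
  rw [Nat.card_congr e]
  have hk : ((Nat.card k : ℕ) : ZMod p) = 0 := by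
    rw [CharP.cast_eq_zero_iff (ZMod p) p, ← CharP.cast_eq_zero_iff k p, Nat.card_eq_fintype_card]
    exact Nat.cast_card_eq_zero k
  have hUc : ((Nat.card U : ℕ) : ZMod p) = 0 := by
    rw [Module.natCard_eq_pow_finrank (K := k) (V := U), Nat.cast_pow, hk, zero_pow]
    rwa [Ne, Submodule.finrank_eq_zero]
  have h := congrArg (Nat.cast : ℕ → ZMod p) (Projectivization.card' k U)
  have h1 : 1 ≤ Nat.card k := Nat.card_pos
  push_cast [Nat.cast_sub h1] at h
  rw [hUc, hk] at h
  linear_combination h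

/-- If `S` holds on a two-dimensional subspace `L`, all points of `L` are counted, and
`ker φ` cuts out a nonzero subspace of `L`, so the indicator function of `ker φ`
sums to `1` over the points of `L`. -/
lemma finsum_points_below (p : ℕ) [Finite k] [Finite V] [CharP k p] (S : V → Prop)
    (L : Submodule k V) (hL : Module.finrank k L = 2) (hS : ∀ v ∈ L, S v) (φ : V →ₗ[k] k) :
    ∑ᶠ X ∈ {X : {W : Submodule k V // Module.finrank k W = 1 ∧ ∀ v ∈ W, S v} | X.1 ≤ L},
      (if X.1 ≤ LinearMap.ker φ then (1 : ZMod p) else 0) = 1 := by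
  have := Fintype.ofFinite {W : Submodule k V // Module.finrank k W = 1 ∧ ∀ v ∈ W, S v}
  have hne : L ⊓ LinearMap.ker φ ≠ ⊥ := by
    intro h
    have h1 := Submodule.finrank_add_finrank_le_of_disjoint (disjoint_iff.2 h)
    have h2 := LinearMap.finrank_range_add_finrank_ker φ
    have h3 := Submodule.finrank_le (LinearMap.range φ)
    rw [Module.finrank_self] at h3
    omega
  have hcard := card_points_below_cast p _ hne
  rw [finsum_mem_eq_toFinset_sum, Finset.sum_boole, ← hcard, ← Nat.card_eq_finsetCard]
  congr 1
  refine Nat.card_congr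
    ⟨fun X => ⟨X.1.1, X.1.2.1, ?_⟩, fun W => ⟨⟨W.1, W.2.1, ?_⟩, ?_⟩, ?_, ?_⟩
  · have := X.2
    simp only [Finset.mem_filter, Set.mem_toFinset] at this
    exact le_inf this.1 this.2
  · exact fun v hv => hS v (W.2.2.trans inf_le_left hv)
  · simp only [Finset.mem_filter, Set.mem_toFinset]
    exact ⟨W.2.2.trans inf_le_left, W.2.2.trans inf_le_right⟩
  · exact fun _ => rfl
  · exact fun _ => rfl

/-- A point of `ker φ` off `ker ψ` is spanned by exactly one vector `v` with `ψ v = 1`, so such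
points are at most as many as these normalised vectors. -/
lemma ncard_points_le [Finite V] (S : V → Prop) (φ ψ : V →ₗ[k] k) :
    Set.ncard {X : {W : Submodule k V // Module.finrank k W = 1 ∧ ∀ v ∈ W, S v} |
      X.1 ≤ LinearMap.ker φ ∧ ¬ X.1 ≤ LinearMap.ker ψ} ≤
    Set.ncard {v : V | S v ∧ φ v = 0 ∧ ψ v = 1} := by
  have key : ∀ X : {W : Submodule k V // Module.finrank k W = 1 ∧ ∀ v ∈ W, S v},
      X.1 ≤ LinearMap.ker φ ∧ ¬ X.1 ≤ LinearMap.ker ψ →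
      ∃ v ∈ {v : V | S v ∧ φ v = 0 ∧ ψ v = 1}, Submodule.span k {v} = X.1 := by
    rintro ⟨W, hW, hS⟩ ⟨h1, h2⟩
    obtain ⟨w, hw, hw'⟩ := SetLike.not_le_iff_exists.1 h2
    have hw0 : ψ w ≠ 0 := hw'
    have hv : (ψ w)⁻¹ • w ∈ W := W.smul_mem _ hw
    refine ⟨(ψ w)⁻¹ • w, ⟨hS _ hv, h1 hv, by simp [hw0]⟩, ?_⟩
    refine Submodule.eq_of_le_of_finrank_eq (by simpa using hv) ?_
    rw [hW, finrank_span_singleton]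
    rintro h
    have := congrArg ψ h
    simp [hw0] at this
  choose! f hf hf' using key
  refine Set.ncard_le_ncard_of_injOn f (fun X hX => hf X hX) ?_ (Set.toFinite _)
  intro X hX Y hY h
  exact Subtype.ext (by rw [← hf' X hX, ← hf' Y hY, h])

/-- The codeword attached to two hyperplanes: the difference of their indicator functions. It is
orthogonal to all lines, since both indicators sum to `1` on each line, and its support is the
symmetric difference of the two hyperplanes. The vector `v₀` spans a point of the support. -/
theorem exists_codeword (p : ℕ) (hp : p.Prime) [Finite k] [Finite V] [CharP k p] (S : V → Prop)
    (φ ψ : V →ₗ[k] k) (v₀ : V) (hv₀ : ∀ c : k, S (c • v₀)) (hφ : φ v₀ = 0) (hψ : ψ v₀ ≠ 0)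
    (N : ℕ) (h₁ : Set.ncard {v : V | S v ∧ φ v = 0 ∧ ψ v = 1} ≤ N)
    (h₂ : Set.ncard {v : V | S v ∧ ψ v = 0 ∧ φ v = 1} ≤ N) :
    ∃ c : {W : Submodule k V // Module.finrank k W = 1 ∧ ∀ v ∈ W, S v} → ZMod p, c ≠ 0 ∧
      (∀ L : {W : Submodule k V // Module.finrank k W = 2 ∧ ∀ v ∈ W, S v},
        ∑ᶠ X ∈ {X : {W : Submodule k V // Module.finrank k W = 1 ∧ ∀ v ∈ W, S v} | X.1 ≤ L.1},
          c X = 0) ∧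
      Set.ncard {X | c X ≠ 0} ≤ 2 * N := by
  have := Fact.mk hp
  refine ⟨fun X => (if X.1 ≤ LinearMap.ker φ then 1 else 0) -
    (if X.1 ≤ LinearMap.ker ψ then 1 else 0), ?_, ?_, ?_⟩
  · intro h
    have hv : v₀ ≠ 0 := by rintro rfl; simp at hψ
    have h' := congrFun h ⟨Submodule.span k {v₀}, finrank_span_singleton hv, by
      intro v hv
      obtain ⟨c, rfl⟩ := Submodule.mem_span_singleton.1 hv
      exact hv₀ c⟩
    simp [hφ, hψ] at h'
  · rintro ⟨L, hL, hS⟩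
    rw [finsum_mem_sub_distrib _ _ (Set.toFinite _), finsum_points_below p S L hL hS,
      finsum_points_below p S L hL hS, sub_self]
  · have hsub : {X : {W : Submodule k V // Module.finrank k W = 1 ∧ ∀ v ∈ W, S v} |
        (if X.1 ≤ LinearMap.ker φ then (1 : ZMod p) else 0) -
          (if X.1 ≤ LinearMap.ker ψ then 1 else 0) ≠ 0} ⊆
        {X | X.1 ≤ LinearMap.ker φ ∧ ¬ X.1 ≤ LinearMap.ker ψ} ∪
        {X | X.1 ≤ LinearMap.ker ψ ∧ ¬ X.1 ≤ LinearMap.ker φ} := by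
      intro X hX
      by_cases ha : X.1 ≤ LinearMap.ker φ <;> by_cases hb : X.1 ≤ LinearMap.ker ψ <;>
        simp_all
    refine (Set.ncard_le_ncard hsub (Set.toFinite _)).trans ((Set.ncard_union_le _ _).trans ?_)
    have := ncard_points_le S φ ψ
    have := ncard_points_le S ψ φ
    omega

end General

/-! ### The affine count on the elliptic quadric -/

section Elliptic

variable {F}

/-- Here `v i = 0` is the tangent hyperplane at one of the points `⟨e₀⟩`, `⟨e₁⟩`, and `v j = 1`
normalises the points off the other one. What is left is `v₂ v₃ + N(v₄, v₅) = 0` with `N`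
anisotropic: if `v₂ ≠ 0` then `v₃` is determined by the rest, and if `v₂ = 0` then
`v₄ = v₅ = 0` while `v₃` is free. -/
lemma ncard_elliptic_le (a b : F) (hirr : ∀ x : F, x ^ 2 + a * x + b ≠ 0) (i j : Fin 6)
    (hij : i = 0 ∧ j = 1 ∨ i = 1 ∧ j = 0) :
    Set.ncard {v : Fin 6 → F | QelForm F a b v = 0 ∧ v i = 0 ∧ v j = 1} ≤
      Fintype.card F ^ 3 - Fintype.card F ^ 2 + Fintype.card F := by
  have aniso : ∀ x y : F, x ^ 2 + a * (x * y) + b * y ^ 2 = 0 → x = 0 ∧ y = 0 := by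
    intro x y h
    by_cases hy : y = 0
    · subst hy
      simpa using h
    · exfalso
      apply hirr (x / y)
      field_simp
      linear_combination h
  -- `f` parametrises the solutions with `v₂ ≠ 0`, and `g` those with `v₂ = 0`
  let f : Fˣ × F × F → Fin 6 → F := fun w =>
    ![if j = 0 then 1 else 0, if j = 0 then 0 else 1, w.1,
      -(w.2.1 ^ 2 + a * (w.2.1 * w.2.2) + b * w.2.2 ^ 2) / w.1, w.2.1, w.2.2]
  let g : F → Fin 6 → F := fun z =>
    ![if j = 0 then 1 else 0, if j = 0 then 0 else 1, 0, z, 0, 0]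
  have hsub : {v : Fin 6 → F | QelForm F a b v = 0 ∧ v i = 0 ∧ v j = 1} ⊆
      Set.range f ∪ Set.range g := by
    rintro v ⟨hQ, hi, hj⟩
    have h01 : v 0 * v 1 = 0 := by
      rcases hij with ⟨rfl, rfl⟩ | ⟨rfl, rfl⟩ <;> simp [hi]
    have hQ' : v 2 * v 3 + (v 4 ^ 2 + a * (v 4 * v 5) + b * v 5 ^ 2) = 0 := by
      unfold QelForm at hQ
      linear_combination hQ - h01
    have h0 : (if j = 0 then 1 else 0) = v 0 := by
      rcases hij with ⟨rfl, rfl⟩ | ⟨rfl, rfl⟩ <;> simp [hi, hj]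
    have h1 : (if j = 0 then 0 else 1) = v 1 := by
      rcases hij with ⟨rfl, rfl⟩ | ⟨rfl, rfl⟩ <;> simp [hi, hj]
    by_cases h2 : v 2 = 0
    · right
      obtain ⟨h4, h5⟩ := aniso (v 4) (v 5) (by simpa [h2] using hQ')
      refine ⟨v 3, ?_⟩
      ext m
      fin_cases m <;> simp [g, h0, h1, h2, h4, h5]
    · left
      refine ⟨(Units.mk0 _ h2, v 4, v 5), ?_⟩
      have h3 : -(v 4 ^ 2 + a * (v 4 * v 5) + b * v 5 ^ 2) / v 2 = v 3 := by
        rw [div_eq_iff h2]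
        linear_combination -hQ'
      ext m
      fin_cases m <;> simp only [f, h0, h1, h3, Units.val_mk0] <;> rfl
  have hf : (Set.range f).ncard ≤ (Fintype.card F - 1) * (Fintype.card F * Fintype.card F) := by
    rw [← Set.image_univ]
    refine (Set.ncard_image_le Set.finite_univ).trans ?_
    rw [Set.ncard_univ, Nat.card_eq_fintype_card, Fintype.card_prod, Fintype.card_prod,
      Fintype.card_units]
  have hg : (Set.range g).ncard ≤ Fintype.card F := by
    rw [← Set.image_univ]
    refine (Set.ncard_image_le Set.finite_univ).trans ?_
    rw [Set.ncard_univ, Nat.card_eq_fintype_card]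
  refine (Set.ncard_le_ncard hsub (Set.toFinite _)).trans ((Set.ncard_union_le _ _).trans ?_)
  have : Fintype.card F ^ 3 - Fintype.card F ^ 2 =
      (Fintype.card F - 1) * (Fintype.card F * Fintype.card F) := by
    rw [Nat.sub_mul]
    congr 1 <;> ring
  omega

end Elliptic

/-! ### The affine count on the Hermitian variety -/

section Hermitian

variable {K}

lemma card_pow_eq_le (n : ℕ) (hn : 0 < n) (a : K) :
    (Finset.univ.filter fun x : K => x ^ n = a).card ≤ n := by
  have h : (Finset.univ.filter fun x : K => x ^ n = a) = (Polynomial.nthRoots n a).toFinset := by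
    ext x
    simp [Polynomial.mem_nthRoots hn]
  rw [h]
  exact (Multiset.toFinset_card_le _).trans (Polynomial.card_nthRoots n a)

/-- The norm equation `x^(q+1) = -1` has at least `q + 1` solutions in the field of order `q²`.
The norm maps the `q² - 1 = (q - 1)(q + 1)` nonzero elements into the at most `q - 1` roots of `x^(q-1) = 1`, one
of which is `-1`, and each fibre has at most `q + 1` elements; so no fibre can be smaller. -/
lemma card_norm_eq_neg_one (q : ℕ) (hq : 2 ≤ q) (hKq : Fintype.card K = q ^ 2)
    (hneg : (-1 : K) ^ q = -1) :
    q + 1 ≤ (Finset.univ.filter fun x : K => x ^ (q + 1) = -1).card := by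
  -- `q = r + 2` avoids truncated subtraction in `q - 1` and `q - 2`
  obtain ⟨r, rfl⟩ : ∃ r, q = r + 2 := ⟨q - 2, by omega⟩
  set R := (Finset.univ.filter fun x : K => x ^ (r + 1) = 1) with hR
  have hmem : (-1 : K) ∈ R := by
    simp only [hR, Finset.mem_filter, Finset.mem_univ, true_and]
    rw [pow_succ] at hneg
    linear_combination -hneg
  have hRc : (R.erase (-1)).card ≤ r := by
    rw [Finset.card_erase_of_mem hmem]
    have : R.card ≤ r + 1 := card_pow_eq_le (r + 1) (by omega) (1 : K)
    omega
  have h1 : (Finset.univ.filter fun x : K => x ≠ 0 ∧ x ^ (r + 2 + 1) ≠ -1).card ≤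
      (r + 2 + 1) * (R.erase (-1)).card := by
    refine Finset.card_le_mul_card_image_of_maps_to (f := fun x : K => x ^ (r + 2 + 1)) ?_ _ ?_
    · intro x hx
      simp only [Finset.mem_filter, Finset.mem_univ, true_and] at hx
      simp only [hR, Finset.mem_erase, Finset.mem_filter, Finset.mem_univ, true_and]
      refine ⟨hx.2, ?_⟩
      rw [← pow_mul, show (r + 2 + 1) * (r + 1) = Fintype.card K - 1 by
        rw [hKq]; exact Nat.eq_sub_of_add_eq (by ring)]
      exact FiniteField.pow_card_sub_one_eq_one x hx.1
    · intro b _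
      refine (Finset.card_le_card ?_).trans (card_pow_eq_le (r + 2 + 1) (by omega) b)
      intro x hx
      simp at hx ⊢
      exact hx.2
  have h2 : (Finset.univ : Finset K) ⊆ (Finset.univ.filter fun x : K => x ^ (r + 2 + 1) = -1) ∪
      ((Finset.univ.filter fun x : K => x ≠ 0 ∧ x ^ (r + 2 + 1) ≠ -1) ∪ {0}) := by
    intro x _
    simp
    tauto
  have h3 := (Finset.card_le_card h2).trans ((Finset.card_union_le _ _).trans
    (Nat.add_le_add_left (Finset.card_union_le _ _) _))
  rw [Finset.card_univ, hKq, Finset.card_singleton] at h3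
  have h4 : (r + 2 + 1) * (R.erase (-1)).card ≤ (r + 2 + 1) * r := Nat.mul_le_mul_left _ hRc
  nlinarith

/-- The binary Hermitian form has, besides the zero vector, the zeros `(u m, u)` with `u ≠ 0` and
`m ^ (q + 1) = -1`. A lower bound is what the ternary count needs. -/
lemma card_hermitian_two (q : ℕ) (hq : 2 ≤ q) (hKq : Fintype.card K = q ^ 2)
    (hneg : (-1 : K) ^ q = -1) :
    1 + (q ^ 2 - 1) * (q + 1) ≤
      (Finset.univ.filter fun w : K × K => w.1 ^ (q + 1) + w.2 ^ (q + 1) = 0).card := by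
  set M := (Finset.univ.filter fun x : K => x ^ (q + 1) = -1) with hM
  have hMc : q + 1 ≤ M.card := card_norm_eq_neg_one q hq hKq hneg
  let T : Finset (K × K) := ((Finset.univ : Finset Kˣ) ×ˢ M).image fun w =>
    ((w.1 : K) * w.2, (w.1 : K))
  have hT : T.card = (q ^ 2 - 1) * M.card := by
    rw [Finset.card_image_of_injective, Finset.card_product, Finset.card_univ,
      Fintype.card_units, hKq]
    rintro ⟨u, m⟩ ⟨u', m'⟩ h
    simp only [Prod.mk.injEq] at h
    obtain ⟨h1, h2⟩ := h
    have := Units.ext h2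
    subst this
    simpa using h1
  have h0 : ((0 : K), (0 : K)) ∉ T := by
    simp [T]
  have hsub : insert ((0 : K), (0 : K)) T ⊆
      Finset.univ.filter fun w : K × K => w.1 ^ (q + 1) + w.2 ^ (q + 1) = 0 := by
    intro w hw
    rw [Finset.mem_insert] at hw
    rcases hw with rfl | hw
    · simp
    · simp only [T, hM, Finset.mem_image, Finset.mem_product, Finset.mem_filter, Finset.mem_univ,
        true_and] at hw ⊢
      obtain ⟨⟨u, m⟩, hm, rfl⟩ := hw
      simp only [mul_pow] at hm ⊢
      rw [hm]
      ring
  have := Finset.card_le_card hsub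
  rw [Finset.card_insert_of_notMem h0, hT] at this
  have := Nat.mul_le_mul_left (q ^ 2 - 1) hMc
  omega

/-- Fibre the zeros `((x, y), z)` of the ternary Hermitian form over `(x, y)`: over a zero of the
binary form `z` vanishes, and over each other pair there are at most `q + 1` values of `z`. -/
lemma card_hermitian_three (q : ℕ) (hq : 2 ≤ q) (hKq : Fintype.card K = q ^ 2)
    (hneg : (-1 : K) ^ q = -1) :
    (Finset.univ.filter fun w : (K × K) × K =>
      w.1.1 ^ (q + 1) + w.1.2 ^ (q + 1) + w.2 ^ (q + 1) = 0).card ≤ q ^ 5 - q ^ 3 + q ^ 2 := by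
  set B := (Finset.univ.filter fun w : K × K => w.1 ^ (q + 1) + w.2 ^ (q + 1) = 0) with hB
  have hBc : 1 + (q ^ 2 - 1) * (q + 1) ≤ B.card := card_hermitian_two q hq hKq hneg
  have hBB : B.card + Bᶜ.card = q ^ 4 := by
    rw [Finset.card_add_card_compl, Fintype.card_prod, hKq]
    ring
  set A := (Finset.univ.filter fun w : (K × K) × K =>
      w.1.1 ^ (q + 1) + w.1.2 ^ (q + 1) + w.2 ^ (q + 1) = 0) with hA
  have h1 : (A.filter fun w => w.1 ∈ B).card ≤ 1 * B.card := by
    refine Finset.card_le_mul_card_image_of_maps_to (f := Prod.fst) ?_ _ ?_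
    · intro w hw
      exact (Finset.mem_filter.1 hw).2
    · intro b hb
      rw [Finset.card_le_one]
      have h0 : ∀ w ∈ (A.filter fun w => w.1 ∈ B).filter fun w => w.1 = b, w = (b, 0) := by
        rintro ⟨⟨x, y⟩, z⟩ hw
        simp only [hA, hB, Finset.mem_filter, Finset.mem_univ, true_and] at hw
        obtain ⟨⟨h1, h2⟩, rfl⟩ := hw
        rw [h2, zero_add] at h1
        rw [pow_eq_zero_iff (by omega)] at h1
        rw [h1]
      intro w hw w' hw'
      rw [h0 w hw, h0 w' hw']
  have h2 : (A.filter fun w => ¬ w.1 ∈ B).card ≤ (q + 1) * Bᶜ.card := by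
    refine Finset.card_le_mul_card_image_of_maps_to (f := Prod.fst) ?_ _ ?_
    · intro w hw
      exact Finset.mem_compl.2 (Finset.mem_filter.1 hw).2
    · rintro b -
      refine le_trans ?_ (card_pow_eq_le (q + 1) (by omega) (-(b.1 ^ (q + 1) + b.2 ^ (q + 1))))
      refine Finset.card_le_card_of_injOn Prod.snd ?_ ?_
      · rintro ⟨w, z⟩ hw
        simp only [hA, Finset.coe_filter, Finset.mem_filter, Finset.mem_univ, true_and,
          Set.mem_ofPred_eq] at hw ⊢
        obtain ⟨⟨h1, -⟩, rfl⟩ := hw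
        linear_combination h1
      · rintro ⟨w, z⟩ hw ⟨w', z'⟩ hw' h
        simp only [Finset.coe_filter, Set.mem_ofPred_eq] at hw hw' h
        rw [hw.2, hw'.2, h]
  have h3 := Finset.card_filter_add_card_filter_not (s := A) (fun w => w.1 ∈ B)
  have h4 : q ^ 3 ≤ q ^ 5 := Nat.pow_le_pow_right (by omega) (by omega)
  have h5 : 1 ≤ q ^ 2 := Nat.one_le_pow _ _ (by omega)
  zify [h4, h5] at *
  nlinarith

/-- For `t ^ (q + 1) = -1`, the equation `v₀ + t^q v₁ = 0` describes the tangent hyperplane of the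
Hermitian variety at `⟨(1, t, 0, 0, 0)⟩`. On it `v₀^(q+1) + v₁^(q+1) = 0`, and the two linear
equations determine `v₀` and `v₁`, so the vectors counted inject into the zeros of the ternary
Hermitian form via `(v₂, v₃, v₄)`. -/
lemma ncard_hermitian_le (q : ℕ) (hq : 2 ≤ q) (hKq : Fintype.card K = q ^ 2)
    (hneg : (-1 : K) ^ q = -1) (s t : K) (ht : t ^ (q + 1) = -1) :
    Set.ncard {v : Fin 5 → K | H4Form K q v = 0 ∧ v 0 + t ^ q * v 1 = 0 ∧
      v 0 + s ^ q * v 1 = 1} ≤ q ^ 5 - q ^ 3 + q ^ 2 := by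
  refine le_trans ?_ (card_hermitian_three q hq hKq hneg)
  rw [← Set.ncard_coe_finset]
  refine Set.ncard_le_ncard_of_injOn (fun v => ((v 2, v 3), v 4)) ?_ ?_ (Set.toFinite _)
  · rintro v ⟨hv, h1, -⟩
    have h0 : v 0 = -1 * (t ^ q * v 1) := by linear_combination h1
    have h01 : v 0 ^ (q + 1) + v 1 ^ (q + 1) = 0 := by
      have e : (t ^ q) ^ (q + 1) = -1 := by rw [← pow_mul, mul_comm, pow_mul, ht, hneg]
      rw [h0, mul_pow, mul_pow, e, pow_succ (-1 : K), hneg]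
      ring
    simp only [Finset.coe_filter, Finset.mem_univ, true_and, Set.mem_ofPred_eq]
    rw [H4Form, Fin.sum_univ_five] at hv
    linear_combination hv - h01
  · rintro v ⟨-, h1, h2⟩ w ⟨-, h3, h4⟩ h
    simp only [Prod.mk.injEq] at h
    obtain ⟨⟨e2, e3⟩, e4⟩ := h
    have hst : (s ^ q - t ^ q) * (v 1 - w 1) = 0 := by linear_combination h2 - h1 - h4 + h3
    have hne : s ^ q - t ^ q ≠ 0 := by
      intro h
      have : (s ^ q - t ^ q) * v 1 = 1 := by linear_combination h2 - h1
      simp [h] at this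
    have e1 : v 1 = w 1 := sub_eq_zero.1 ((mul_eq_zero.1 hst).resolve_left hne)
    have e0 : v 0 = w 0 := by rw [e1] at h1; linear_combination h1 - h3
    ext m
    fin_cases m
    exacts [e0, e1, e2, e3, e4]

end Hermitian

/-- The minimum weight of the dual code of points and lines of `Q⁻(5,q)` is at most
`2(q³-q²+q)`, and the minimum weight of the dual code of points and lines of `H(4,q²)`
is at most `2(q⁵-q³+q²)`: there are nonzero codewords of these weights. -/
theorem dual_code_Qminus5_H4_min_weight_upper_bounds (p q : ℕ) (hp : p.Prime)
    [CharP F p] [CharP K p]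
    (hFq : Fintype.card F = q) (hKq : Fintype.card K = q ^ 2)
    (a b : F) (hirr : ∀ x : F, x ^ 2 + a * x + b ≠ 0) :
    (∃ c : QelPoint F a b → ZMod p, c ≠ 0 ∧
      (∀ L : QelLine F a b, ∑ᶠ X ∈ {X : QelPoint F a b | X.1 ≤ L.1}, c X = 0) ∧
      Set.ncard {X : QelPoint F a b | c X ≠ 0} ≤ 2 * (q ^ 3 - q ^ 2 + q)) ∧
    (∃ c : H4Point K q → ZMod p, c ≠ 0 ∧
      (∀ L : H4Line K q, ∑ᶠ X ∈ {X : H4Point K q | X.1 ≤ L.1}, c X = 0) ∧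
      Set.ncard {X : H4Point K q | c X ≠ 0} ≤ 2 * (q ^ 5 - q ^ 3 + q ^ 2)) := by
  have hFK : 2 ≤ q := hFq ▸ Fintype.one_lt_card
  constructor
  -- the points are `⟨e₀⟩` and `⟨e₁⟩`, with tangent hyperplanes `v₁ = 0` and `v₀ = 0`
  · refine exists_codeword p hp (fun v => QelForm F a b v = 0) (LinearMap.proj 1)
      (LinearMap.proj 0) (Pi.single 0 1) ?_ ?_ ?_ _ ?_ ?_
    · intro c
      simp [QelForm]
    · simp
    · simp
    · rw [← hFq]
      exact ncard_elliptic_le a b hirr 1 0 (by simp)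
    · rw [← hFq]
      exact ncard_elliptic_le a b hirr 0 1 (by simp)
  · have hneg : (-1 : K) ^ q = -1 := by
      obtain ⟨n, -, hn⟩ := FiniteField.card F p
      have := Fact.mk hp
      rw [← hFq, hn]
      exact neg_one_pow_expChar_pow K p n
    have hc := card_norm_eq_neg_one q hFK hKq hneg
    obtain ⟨t, ht, s, hs, hts⟩ := Finset.one_lt_card.1
      (show 1 < (Finset.univ.filter fun x : K => x ^ (q + 1) = -1).card by omega)
    simp only [Finset.mem_filter, Finset.mem_univ, true_and] at ht hs
    refine exists_codeword p hp (fun v => H4Form K q v = 0)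
      (LinearMap.proj 0 + t ^ q • LinearMap.proj 1)
      (LinearMap.proj 0 + s ^ q • LinearMap.proj 1) ![1, t, 0, 0, 0] ?_ ?_ ?_ _ ?_ ?_
    · intro c
      simp [H4Form, Fin.sum_univ_five, mul_pow, ht]
    · simp [← pow_succ, ht]
    -- `1 + s^q t = 0 = 1 + s^q s` would force `s = t`
    · intro h
      have h' : 1 + s ^ q * t = 0 := by simpa using h
      have hs0 : s ^ q ≠ 0 := by
        intro h0
        simp [h0] at h'
      apply hts
      apply mul_left_cancel₀ hs0
      rw [← pow_succ, hs]
      linear_combination h'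
    · exact ncard_hermitian_le q hFK hKq hneg s t ht
    · exact ncard_hermitian_le q hFK hKq hneg t s hs
end
end
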